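/- arXiv:1808.02133 — 2 statements merged into one kernel-verified Lean document; each statement's English description precedes it below -/
import Mathlib

section
/- Extension from the half-space controlling the projected seminorm: Let d ≥ 1, p ∈ [1,∞), s ∈ (0,1) with ps ≠ 1, and let ℝ^d_+ = {x ∈ ℝ^d : x_d > 0}. Then there exists a constant C = C(p,d,s) > 0 such that for every smooth compactly supported vector field f ∈ C_c^∞(ℝ^d_+; ℝ^d) there exists g ∈ L^p(ℝ^d; ℝ^d) with g = f almost everywhere on ℝ^d_+, [g]_{𝒳^s_p(ℝ^d)} < ∞, and [g]_{𝒳^s_p(ℝ^d)} ≤ C · [f]_{𝒳^s_p(ℝ^d_+)}. -/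
open MeasureTheory Filter Set
open scoped ENNReal NNReal Topology

noncomputable section

abbrev Ed (d : ℕ) : Type := EuclideanSpace ℝ (Fin d)

/-- The `p`-th power of the projected Gagliardo seminorm `[f]_{𝒳^s_p(Ω)}^p`. -/
def projGagP (d : ℕ) (s p : ℝ) (Ω : Set (Ed d)) (f : Ed d → Ed d) : ℝ≥0∞ :=
  ∫⁻ x in Ω, ∫⁻ y in Ω,
    ENNReal.ofReal ((|(inner ℝ (f y - f x) (y - x) : ℝ)| / ‖y - x‖) ^ p /
      ‖y - x‖ ^ ((d : ℝ) + s * p))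

/-- The projected Gagliardo seminorm `[f]_{𝒳^s_p(Ω)}`. -/
def projSem (d : ℕ) (s p : ℝ) (Ω : Set (Ed d)) (f : Ed d → Ed d) : ℝ≥0∞ :=
  projGagP d s p Ω f ^ (1 / p)

/-- The `p`-th power of the Gagliardo seminorm `[f]_{W^{s,p}(Ω)}^p`. -/
def gagP (d : ℕ) (s p : ℝ) (Ω : Set (Ed d)) (f : Ed d → Ed d) : ℝ≥0∞ :=
  ∫⁻ x in Ω, ∫⁻ y in Ω,
    ENNReal.ofReal (‖f y - f x‖ ^ p / ‖y - x‖ ^ ((d : ℝ) + s * p))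

/-- The Gagliardo seminorm `[f]_{W^{s,p}(Ω)}`. -/
def gagSem (d : ℕ) (s p : ℝ) (Ω : Set (Ed d)) (f : Ed d → Ed d) : ℝ≥0∞ :=
  gagP d s p Ω f ^ (1 / p)

/-- The upper half-space `ℝ^{d+1}_+ = {x : x_{d+1} > 0}`. -/
def upperHalf (d : ℕ) : Set (Ed (d + 1)) := {x | 0 < x (Fin.last d)}

/-!
Let `e` be the inner normal of the half-space and let `v` satisfy `⟪e, v⟫ ≥ 2`. The shears
`S x = x - ⟪e, x⟫ v` and `T x = x - ⟪e, x⟫ 2v` fix the boundary, map the lower half-space into the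
upper one, and have determinants of absolute value at least `1`. Following Nitsche, extend `f` to
the lower half-space by `g y = 2 S* f (S y) - T* f (T y)`. Acting on the values with the adjoints
turns projected differences of `g` between two lower points into projected differences of `f`. For
`x` above and `y` below, `⟪g y - f x, y - x⟫` equals

  `2 ⟪f (S y) - f x, S y - x⟫ - ⟪f (T y) - f x, T y - x⟫ - 2 ⟪e, x⟫ ⟪f (T y) - f (S y), v⟫`,

where only the last term is not controlled for an individual `v`. Since `T y - S y` is a multiple
of `v`, that term is itself a projected difference of `f`, and its average over `v` in a ball is a
double integral over pairs of points, bounded by the energy of `f`. Hence some `v` in that ball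
works.
-/

open Module

section Inequalities

lemma two_mul_add_add_two_mul_rpow_le {p : ℝ} (hp : 0 ≤ p) (a b c : ℝ≥0∞) :
    (2 * a + b + 2 * c) ^ p ≤ 6 ^ p * (a ^ p + b ^ p + c ^ p) := by
  have hsum : 2 * a + b + 2 * c ≤ 6 * max (max a b) c := by
    calc 2 * a + b + 2 * c
        ≤ 2 * max (max a b) c + 2 * max (max a b) c + 2 * max (max a b) c := by
          gcongr
          · exact (le_max_left _ _).trans (le_max_left _ _)
          · refine le_trans ?_ (le_mul_of_one_le_left' one_le_two)
            exact (le_max_right _ _).trans (le_max_left _ _)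
          · exact le_max_right _ _
      _ = 6 * max (max a b) c := by ring
  calc (2 * a + b + 2 * c) ^ p
      ≤ (6 * max (max a b) c) ^ p := by gcongr
    _ = 6 ^ p * max (max (a ^ p) (b ^ p)) (c ^ p) := by
        rw [ENNReal.mul_rpow_of_nonneg _ _ hp, (ENNReal.monotone_rpow_of_nonneg hp).map_max,
          (ENNReal.monotone_rpow_of_nonneg hp).map_max]
    _ ≤ 6 ^ p * (a ^ p + b ^ p + c ^ p) := by
        gcongr
        exact (max_le_add_of_nonneg zero_le zero_le).trans
          (by gcongr; exact max_le_add_of_nonneg zero_le zero_le)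

lemma div_rpow_le_mul_div_rpow {r : ℝ} (hr : 0 ≤ r) {K ρ σ : ℝ≥0∞} (hK₀ : K ≠ 0) (hK : K ≠ ∞)
    (hσ : σ ≤ K * ρ) (a : ℝ≥0∞) : a / ρ ^ r ≤ K ^ r * (a / σ ^ r) := by
  calc a / ρ ^ r = K ^ r * a / (K ^ r * ρ ^ r) :=
        (ENNReal.mul_div_mul_left _ _ (by simp [hK₀, hK]) (by simp [hK₀, hK])).symm
    _ = K ^ r * (a / (K * ρ) ^ r) := by rw [ENNReal.mul_rpow_of_nonneg _ _ hr, mul_div_assoc]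
    _ ≤ K ^ r * (a / σ ^ r) := by gcongr

lemma enorm_two_smul {F : Type*} [SeminormedAddCommGroup F] [NormedSpace ℝ F] (v : F) :
    ‖(2 : ℝ) • v‖ₑ = 2 * ‖v‖ₑ := by
  rw [enorm_smul, ← Nat.cast_ofNat, Real.enorm_natCast, Nat.cast_ofNat]

end Inequalities

section Lintegral

lemma lintegral_lintegral_add {α β : Type*} [MeasurableSpace α] [MeasurableSpace β]
    {μ : Measure α} {ν : Measure β} [SFinite ν] {F G : α → β → ℝ≥0∞}
    (hF : Measurable (Function.uncurry F)) :
    ∫⁻ x, ∫⁻ y, F x y + G x y ∂ν ∂μ =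
      (∫⁻ x, ∫⁻ y, F x y ∂ν ∂μ) + ∫⁻ x, ∫⁻ y, G x y ∂ν ∂μ := by
  rw [← lintegral_add_left hF.lintegral_prod_right]
  exact lintegral_congr fun x => lintegral_add_left hF.of_uncurry_left _

lemma lintegral_lintegral_comp_add_add {G : Type*} [AddGroup G] [MeasurableSpace G]
    [MeasurableAdd₂ G] {μ : Measure G} [SFinite μ] [μ.IsAddLeftInvariant]
    [μ.IsAddRightInvariant] {F : G × G → ℝ≥0∞} (hF : Measurable F) :
    ∫⁻ y, ∫⁻ z, F (y + z, y + z + z) ∂μ ∂μ = ∫⁻ x, ∫⁻ y, F (x, y) ∂μ ∂μ := by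
  have hmp : MeasurePreserving (fun z : G × G => (z.1 + z.2, z.1 + z.2 + z.2))
      (μ.prod μ) (μ.prod μ) :=
    (measurePreserving_prod_add μ μ).comp (measurePreserving_add_prod μ μ)
  calc ∫⁻ y, ∫⁻ z, F (y + z, y + z + z) ∂μ ∂μ
      = ∫⁻ w, F (w.1 + w.2, w.1 + w.2 + w.2) ∂μ.prod μ :=
        (lintegral_prod _ (hF.comp hmp.measurable).aemeasurable).symm
    _ = ∫⁻ w, F w ∂μ.prod μ := hmp.lintegral_comp hF
    _ = ∫⁻ x, ∫⁻ y, F (x, y) ∂μ ∂μ := lintegral_prod _ hF.aemeasurable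

variable {E : Type*} [NormedAddCommGroup E] [NormedSpace ℝ E] [FiniteDimensional ℝ E]
  [MeasurableSpace E] [BorelSpace E] (μ : Measure E) [μ.IsAddHaarMeasure]

lemma enorm_rpow_finrank_mul_lintegral_comp_smul {t : ℝ} (ht : t ≠ 0) {F : E → ℝ≥0∞}
    (hF : Measurable F) :
    ‖t‖ₑ ^ (finrank ℝ E : ℝ) * ∫⁻ v, F (t • v) ∂μ = ∫⁻ z, F z ∂μ := by
  rw [← lintegral_map (g := fun v => t • v) hF (by fun_prop), Measure.map_addHaar_smul μ ht,
    lintegral_smul_measure, smul_eq_mul, ← mul_assoc, ENNReal.rpow_natCast]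
  have : ENNReal.ofReal |(t ^ finrank ℝ E)⁻¹| = (‖t‖ₑ ^ finrank ℝ E)⁻¹ := by
    rw [← enorm_pow, ← Real.enorm_eq_ofReal_abs, enorm_inv (pow_ne_zero _ ht)]
  rw [this, ENNReal.mul_inv_cancel (by simp [ht]) (by simp), one_mul]

/-- The mass of `‖z‖ ^ (-q)` off the unit ball, finite when `q` exceeds the dimension. -/
def tailMass (q : ℝ) : ℝ≥0∞ := ∫⁻ z in {z : E | 1 ≤ ‖z‖}, ‖z‖ₑ ^ (-q) ∂μ

lemma tailMass_lt_top {q : ℝ} (hq : finrank ℝ E < q) : tailMass μ q < ∞ := by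
  have hq₀ : 0 < q := (Nat.cast_nonneg _).trans_lt hq
  have hle : ∀ z ∈ {z : E | 1 ≤ ‖z‖},
      ‖z‖ₑ ^ (-q) ≤ ENNReal.ofReal (2 ^ q) * ENNReal.ofReal ((1 + ‖z‖) ^ (-q)) := by
    intro z (hz : 1 ≤ ‖z‖)
    have hz₀ : 0 < ‖z‖ := one_pos.trans_le hz
    rw [← ofReal_norm, ENNReal.ofReal_rpow_of_pos hz₀, ← ENNReal.ofReal_mul (by positivity)]
    apply ENNReal.ofReal_le_ofReal
    calc ‖z‖ ^ (-q) ≤ ((1 + ‖z‖) / 2) ^ (-q) :=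
          Real.rpow_le_rpow_of_nonpos (by positivity) (by linarith) (neg_nonpos.2 hq₀.le)
      _ = 2 ^ q * (1 + ‖z‖) ^ (-q) := by
          rw [Real.div_rpow (by positivity) zero_le_two, Real.rpow_neg zero_le_two,
            div_inv_eq_mul, mul_comm]
  calc tailMass μ q
      ≤ ∫⁻ z in {z : E | 1 ≤ ‖z‖}, ENNReal.ofReal (2 ^ q) * ENNReal.ofReal ((1 + ‖z‖) ^ (-q)) ∂μ :=
        setLIntegral_mono (by fun_prop) hle
    _ ≤ ∫⁻ z, ENNReal.ofReal (2 ^ q) * ENNReal.ofReal ((1 + ‖z‖) ^ (-q)) ∂μ :=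
        setLIntegral_le_lintegral _ _
    _ = ENNReal.ofReal (2 ^ q) * ∫⁻ z, ENNReal.ofReal ((1 + ‖z‖) ^ (-q)) ∂μ :=
        lintegral_const_mul' _ _ ENNReal.ofReal_ne_top
    _ < ∞ := ENNReal.mul_lt_top ENNReal.ofReal_lt_top (finite_integral_one_add_norm hq)

lemma setLIntegral_le_norm_rpow_neg (q : ℝ) {t : ℝ} (ht : 0 < t) :
    ∫⁻ z in {z : E | t ≤ ‖z‖}, ‖z‖ₑ ^ (-q) ∂μ = tailMass μ q * ‖t‖ₑ ^ (finrank ℝ E - q) := by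
  have hmeas : ∀ r : ℝ, MeasurableSet {z : E | r ≤ ‖z‖} := fun r =>
    measurableSet_le measurable_const measurable_norm
  have hscale : ∀ v : E, {z : E | t ≤ ‖z‖}.indicator (fun z => ‖z‖ₑ ^ (-q)) (t • v) =
      ‖t‖ₑ ^ (-q) * {z : E | 1 ≤ ‖z‖}.indicator (fun z => ‖z‖ₑ ^ (-q)) v := by
    intro v
    have hmem : t ≤ ‖t • v‖ ↔ 1 ≤ ‖v‖ := by
      rw [norm_smul, Real.norm_of_nonneg ht.le, le_mul_iff_one_le_right ht]
    simp only [indicator_apply, mem_ofPred_eq, hmem, mul_ite, mul_zero, enorm_smul]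
    rw [ENNReal.mul_rpow_of_ne_top (by simp) (by simp)]
  rw [← lintegral_indicator (hmeas t), ← enorm_rpow_finrank_mul_lintegral_comp_smul μ ht.ne'
      (by measurability)]
  simp_rw [hscale]
  rw [lintegral_const_mul' _ _ (by simp [ht.ne']), lintegral_indicator (hmeas 1), tailMass,
    sub_eq_add_neg, ENNReal.rpow_add _ _ (by simpa using ht.ne') (by simp)]
  ring

end Lintegral
variable {E : Type*} [NormedAddCommGroup E] [InnerProductSpace ℝ E]

open scoped InnerProductSpace

section Kernel

lemma enorm_inner_le_enorm_mul_enorm (x y : E) : ‖⟪x, y⟫_ℝ‖ₑ ≤ ‖x‖ₑ * ‖y‖ₑ := by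
  simpa only [← ofReal_norm, ← ENNReal.ofReal_mul (norm_nonneg _)] using
    ENNReal.ofReal_le_ofReal (norm_inner_le_norm x y)

/-- The integrand of the projected Gagliardo seminorm, with its weight `‖y - x‖ ^ (d + s p)`
replaced by a general `‖y - x‖ ^ q`. On the diagonal the quotient is `0 / 0 = 0`. -/
def projKernel (p q : ℝ) (f : E → E) (x y : E) : ℝ≥0∞ :=
  ‖⟪f y - f x, y - x⟫_ℝ‖ₑ ^ p / ‖y - x‖ₑ ^ (p + q)

lemma projKernel_comm (p q : ℝ) (f : E → E) (x y : E) :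
    projKernel p q f x y = projKernel p q f y x := by
  rw [projKernel, projKernel, ← neg_sub (f x) (f y), ← neg_sub x y, inner_neg_neg, enorm_neg]

lemma projKernel_congr {p q : ℝ} {f g : E → E} {x y : E} (hx : f x = g x) (hy : f y = g y) :
    projKernel p q f x y = projKernel p q g x y := by
  rw [projKernel, projKernel, hx, hy]

lemma projKernel_eq_zero {p q : ℝ} (hp : 0 < p) {f : E → E} {x y : E} (h : f x = f y) :
    projKernel p q f x y = 0 := by
  simp [projKernel, h, hp]

lemma projKernel_eq_ofReal {p q : ℝ} (hp : 0 < p) (f : E → E) (x y : E) :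
    projKernel p q f x y =
      ENNReal.ofReal ((|⟪f y - f x, y - x⟫_ℝ| / ‖y - x‖) ^ p / ‖y - x‖ ^ q) := by
  rcases (norm_nonneg (y - x)).eq_or_lt with h | h
  · rw [eq_comm, norm_eq_zero] at h
    simp [projKernel, h, hp, hp.ne']
  · rw [projKernel, ← ofReal_norm, ← ofReal_norm, ENNReal.ofReal_rpow_of_pos h,
      ENNReal.ofReal_rpow_of_nonneg (norm_nonneg _) hp.le,
      ← ENNReal.ofReal_div_of_pos (by positivity), Real.norm_eq_abs,
      Real.div_rpow (abs_nonneg _) h.le, div_div, Real.rpow_add h]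

lemma projKernel_le_of_inner_eq {p q : ℝ} (hp : 0 ≤ p) {f : E → E} {x y : E} {a b c : ℝ}
    (h : ⟪f y - f x, y - x⟫_ℝ = 2 * a - b - 2 * c) :
    projKernel p q f x y ≤ 6 ^ p * (‖a‖ₑ ^ p / ‖y - x‖ₑ ^ (p + q) + ‖b‖ₑ ^ p / ‖y - x‖ₑ ^ (p + q) +
      ‖c‖ₑ ^ p / ‖y - x‖ₑ ^ (p + q)) := by
  have htri : ‖⟪f y - f x, y - x⟫_ℝ‖ₑ ≤ 2 * ‖a‖ₑ + ‖b‖ₑ + 2 * ‖c‖ₑ := by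
    rw [h, ← enorm_two_smul, ← enorm_two_smul, smul_eq_mul, smul_eq_mul]
    exact enorm_sub_le.trans (by gcongr; exact enorm_sub_le)
  calc projKernel p q f x y
      ≤ (2 * ‖a‖ₑ + ‖b‖ₑ + 2 * ‖c‖ₑ) ^ p / ‖y - x‖ₑ ^ (p + q) := by
        unfold projKernel
        gcongr
    _ ≤ 6 ^ p * (‖a‖ₑ ^ p + ‖b‖ₑ ^ p + ‖c‖ₑ ^ p) / ‖y - x‖ₑ ^ (p + q) := by
        gcongr
        exact two_mul_add_add_two_mul_rpow_le hp _ _ _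
    _ = _ := by rw [mul_div_assoc, ENNReal.add_div, ENNReal.add_div]

variable [MeasurableSpace E]

/-- The interaction energy of `f` between `A` and `B` for `projKernel`. The diagonal case
`A = B = Ω` is the `p`-th power of the projected Gagliardo seminorm on `Ω`. -/
def projEnergy (μ : Measure E) (p q : ℝ) (A B : Set E) (f : E → E) : ℝ≥0∞ :=
  ∫⁻ x in A, ∫⁻ y in B, projKernel p q f x y ∂μ ∂μ

variable {μ : Measure E} {p q : ℝ} {A B : Set E} {f g : E → E}

lemma projEnergy_congr_ae (hA : f =ᵐ[μ.restrict A] g) (hB : f =ᵐ[μ.restrict B] g) :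
    projEnergy μ p q A B f = projEnergy μ p q A B g := by
  refine lintegral_congr_ae (hA.mono fun x hx => lintegral_congr_ae (hB.mono fun y hy => ?_))
  exact projKernel_congr hx hy

lemma projEnergy_mono {A' B' : Set E} (hA : A ⊆ A') (hB : B ⊆ B') :
    projEnergy μ p q A B f ≤ projEnergy μ p q A' B' f :=
  (lintegral_mono fun _ => lintegral_mono_set hB).trans (lintegral_mono_set hA)

lemma lintegral_indicator_prod_projKernel {A B : Set E} (hA : MeasurableSet A)
    (hB : MeasurableSet B) :
    ∫⁻ x, ∫⁻ y, (A ×ˢ B).indicator (Function.uncurry (projKernel p q f)) (x, y) ∂μ ∂μ =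
      projEnergy μ p q A B f := by
  rw [projEnergy, ← lintegral_indicator hA]
  refine lintegral_congr fun x => ?_
  by_cases hx : x ∈ A
  · rw [indicator_of_mem hx, ← lintegral_indicator hB]
    refine lintegral_congr fun y => ?_
    by_cases hy : y ∈ B <;> simp [hx, hy]
  · simp [hx]

variable [BorelSpace E] [SecondCountableTopology E]

@[fun_prop]
lemma measurable_projKernel {α : Type*} [MeasurableSpace α] (p q : ℝ) (hf : Measurable f)
    {u v : α → E} (hu : Measurable u) (hv : Measurable v) :
    Measurable fun a => projKernel p q f (u a) (v a) := by
  unfold projKernel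
  fun_prop

variable [SFinite μ]

lemma projEnergy_comm (hf : Measurable f) : projEnergy μ p q A B f = projEnergy μ p q B A f := by
  rw [projEnergy, lintegral_lintegral_swap (by fun_prop)]
  simp_rw [projKernel_comm p q f, projEnergy]

lemma projEnergy_univ_eq_add (hf : Measurable f) (hA : MeasurableSet A) :
    projEnergy μ p q univ univ f =
      projEnergy μ p q A A f + 2 * projEnergy μ p q A Aᶜ f + projEnergy μ p q Aᶜ Aᶜ f := by
  have hadd (B : Set E) : projEnergy μ p q B univ f =
      projEnergy μ p q B A f + projEnergy μ p q B Aᶜ f := by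
    have hm : Measurable fun x => ∫⁻ y in A, projKernel p q f x y ∂μ :=
      Measurable.lintegral_prod_right (f := projKernel p q f) (by fun_prop)
    simp only [projEnergy]
    rw [← lintegral_add_left hm]
    simp_rw [lintegral_add_compl _ hA, Measure.restrict_univ]
  calc projEnergy μ p q univ univ f
      = projEnergy μ p q A univ f + projEnergy μ p q Aᶜ univ f := by
        rw [projEnergy_comm hf, hadd, projEnergy_comm hf, projEnergy_comm (A := univ) hf]
    _ = _ := by
        rw [hadd, hadd, projEnergy_comm (A := Aᶜ) (B := A) hf]
        ring

end Kernel

section Finiteness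

lemma exists_enorm_sub_le_mul_min {X F : Type*} [NormedAddCommGroup X] [NormedAddCommGroup F]
    {f : X → F} {K : ℝ≥0} (hf : LipschitzWith K f) (hc : HasCompactSupport f) :
    ∃ C : ℝ≥0, ∀ x y, ‖f y - f x‖ₑ ≤ C * min ‖y - x‖ₑ 1 := by
  obtain ⟨M, hM⟩ := hc.exists_bound_of_continuous hf.continuous
  refine ⟨max K (2 * M).toNNReal, fun x y => ?_⟩
  rw [mul_min, mul_one]
  refine le_min ?_ ?_
  · rw [← edist_eq_enorm_sub, ← edist_eq_enorm_sub]
    exact (hf y x).trans (by gcongr; exact le_max_left _ _)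
  · rw [← ofReal_norm]
    have : ‖f y - f x‖ ≤ 2 * M := by linarith [norm_sub_le (f y) (f x), hM x, hM y]
    exact (ENNReal.ofReal_le_ofReal this).trans (ENNReal.coe_le_coe.2 (le_max_right _ _))

lemma projKernel_le_of_enorm_sub_le {p q : ℝ} (hp : 0 < p) {f : E → E} {x y : E} {C : ℝ≥0∞}
    (hf : ‖f y - f x‖ₑ ≤ C * min ‖y - x‖ₑ 1) :
    projKernel p q f x y ≤ C ^ p * (min ‖y - x‖ₑ 1 ^ p / ‖y - x‖ₑ ^ q) := by
  rcases eq_or_ne x y with rfl | hxy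
  · simp [projKernel_eq_zero hp]
  have h₀ : ‖y - x‖ₑ ≠ 0 := by simpa [sub_eq_zero] using hxy.symm
  calc projKernel p q f x y
      ≤ (C * min ‖y - x‖ₑ 1 * ‖y - x‖ₑ) ^ p / ‖y - x‖ₑ ^ (p + q) := by
        unfold projKernel
        gcongr
        exact (enorm_inner_le_enorm_mul_enorm _ _).trans (by gcongr)
    _ = C ^ p * (min ‖y - x‖ₑ 1 ^ p / ‖y - x‖ₑ ^ q) := by
        rw [ENNReal.mul_rpow_of_nonneg _ _ hp.le, ENNReal.mul_rpow_of_nonneg _ _ hp.le,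
          ENNReal.rpow_add _ _ h₀ enorm_ne_top, mul_comm (‖y - x‖ₑ ^ p),
          ENNReal.mul_div_mul_right _ _ (by simp [h₀]) (by simp [hp.le]), mul_div_assoc]

variable [FiniteDimensional ℝ E] [MeasurableSpace E] [BorelSpace E]
  (μ : Measure E) [μ.IsAddHaarMeasure] {p q : ℝ}

lemma setLIntegral_ball_enorm_rpow_div_lt_top [Nontrivial E] (hp : 0 < p)
    (hq : q < finrank ℝ E + p) :
    ∫⁻ z in Metric.ball (0 : E) 1, ‖z‖ₑ ^ p / ‖z‖ₑ ^ q ∂μ < ∞ := by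
  have hint : IntegrableOn (fun z : E => ‖z‖ ^ (p - q)) (Metric.ball 0 1) μ := by
    refine integrableOn_ball_of_norm_le_rpow (C := 1) (α := q - p) finrank_pos (by linarith)
      (ae_of_all _ fun z => ?_) (measurable_norm.pow_const _).aestronglyMeasurable
    rw [one_mul, neg_sub, Real.norm_of_nonneg (by positivity)]
  refine (lintegral_mono fun z => ?_).trans_lt hint.lintegral_lt_top
  rcases eq_or_ne z 0 with rfl | hz
  · simp [hp]
  · rw [← ENNReal.rpow_sub _ _ (by simpa using hz) enorm_ne_top, ← ofReal_norm,
      ENNReal.ofReal_rpow_of_pos (norm_pos_iff.2 hz)]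

lemma lintegral_min_enorm_one_rpow_div_lt_top [Nontrivial E] (hp : 0 < p) (hq : finrank ℝ E < q)
    (hqp : q < finrank ℝ E + p) : ∫⁻ z : E, min ‖z‖ₑ 1 ^ p / ‖z‖ₑ ^ q ∂μ < ∞ := by
  have hcompl : (Metric.ball (0 : E) 1)ᶜ = {z | 1 ≤ ‖z‖} := by ext; simp
  rw [← lintegral_add_compl _ (measurableSet_ball (x := (0 : E)) (ε := 1)), hcompl]
  refine ENNReal.add_lt_top.2 ⟨?_, ?_⟩
  · refine (lintegral_mono fun z => ?_).trans_lt (setLIntegral_ball_enorm_rpow_div_lt_top μ hp hqp)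
    gcongr
    exact min_le_left _ _
  · refine (lintegral_mono fun z => ?_).trans_lt (tailMass_lt_top μ hq)
    rw [ENNReal.rpow_neg, ← one_div]
    gcongr
    exact ENNReal.rpow_le_one (min_le_right _ _) hp.le

variable {μ} {f : E → E} {K : ℝ≥0}

lemma projEnergy_univ_univ_le_of_compl (hp : 0 < p) (hf : Measurable f) {S : Set E}
    (hS : MeasurableSet S) (hfS : ∀ x ∈ Sᶜ, f x = 0) :
    projEnergy μ p q univ univ f ≤ 3 * projEnergy μ p q S univ f := by
  have hcompl : projEnergy μ p q Sᶜ Sᶜ f = 0 := by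
    rw [projEnergy, setLIntegral_congr_fun hS.compl (g := 0) fun x hx => ?_]
    · simp
    · rw [setLIntegral_congr_fun hS.compl (g := 0) fun y hy => ?_]
      · simp
      · exact projKernel_eq_zero hp ((hfS x hx).trans (hfS y hy).symm)
  calc projEnergy μ p q univ univ f
      = projEnergy μ p q S S f + 2 * projEnergy μ p q S Sᶜ f := by
        rw [projEnergy_univ_eq_add hf hS, hcompl, add_zero]
    _ ≤ projEnergy μ p q S univ f + 2 * projEnergy μ p q S univ f := by
        gcongr <;> exact projEnergy_mono subset_rfl (subset_univ _)
    _ = 3 * projEnergy μ p q S univ f := by ring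

lemma projEnergy_lt_top [Nontrivial E] (hp : 0 < p) (hq : finrank ℝ E < q)
    (hqp : q < finrank ℝ E + p) (hf : LipschitzWith K f) (hc : HasCompactSupport f) :
    projEnergy μ p q univ univ f < ∞ := by
  obtain ⟨C, hC⟩ := exists_enorm_sub_le_mul_min hf hc
  have hinner (x : E) : ∫⁻ y, projKernel p q f x y ∂μ ≤
      C ^ p * ∫⁻ z : E, min ‖z‖ₑ 1 ^ p / ‖z‖ₑ ^ q ∂μ := by
    calc ∫⁻ y, projKernel p q f x y ∂μ
        ≤ ∫⁻ y, C ^ p * (min ‖y - x‖ₑ 1 ^ p / ‖y - x‖ₑ ^ q) ∂μ :=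
          lintegral_mono fun y => projKernel_le_of_enorm_sub_le hp (hC x y)
      _ = C ^ p * ∫⁻ y, min ‖y - x‖ₑ 1 ^ p / ‖y - x‖ₑ ^ q ∂μ :=
          lintegral_const_mul' _ _ (by simp [hp.le])
      _ = _ := by rw [lintegral_sub_right_eq_self (fun z => min ‖z‖ₑ 1 ^ p / ‖z‖ₑ ^ q) x]
  calc projEnergy μ p q univ univ f
      ≤ 3 * projEnergy μ p q (tsupport f) univ f :=
        projEnergy_univ_univ_le_of_compl hp hf.continuous.measurable
          (isClosed_tsupport f).measurableSet fun x hx => image_eq_zero_of_notMem_tsupport hx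
    _ ≤ 3 * ∫⁻ _ in tsupport f, C ^ p * ∫⁻ z : E, min ‖z‖ₑ 1 ^ p / ‖z‖ₑ ^ q ∂μ ∂μ := by
        simp only [projEnergy, Measure.restrict_univ]
        gcongr with x
        exact hinner x
    _ < ∞ := by
        have hm := lintegral_min_enorm_one_rpow_div_lt_top μ hp hq hqp
        have hS := hc.isCompact.measure_lt_top (μ := μ)
        rw [setLIntegral_const]
        finiteness

end Finiteness

section HalfSpace

/-- The open half-space with inner normal `e`. The opposite half-space is `openHalfSpace (-e)`. -/
def openHalfSpace (e : E) : Set E := {x | 0 < ⟪e, x⟫_ℝ}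

lemma mem_openHalfSpace {e x : E} : x ∈ openHalfSpace e ↔ 0 < ⟪e, x⟫_ℝ := Iff.rfl

lemma mem_openHalfSpace_neg {e x : E} : x ∈ openHalfSpace (-e) ↔ ⟪e, x⟫_ℝ < 0 := by
  simp [mem_openHalfSpace, inner_neg_left]

lemma disjoint_openHalfSpace_neg (e : E) : Disjoint (openHalfSpace e) (openHalfSpace (-e)) :=
  disjoint_left.2 fun _ hx hx' => (mem_openHalfSpace_neg.1 hx').not_gt hx

lemma enorm_inner_le_enorm_sub {e x y : E} (he : ‖e‖ = 1) (hx : x ∈ openHalfSpace e)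
    (hy : y ∈ openHalfSpace (-e)) :
    ‖⟪e, x⟫_ℝ‖ₑ ≤ ‖y - x‖ₑ ∧ ‖⟪e, y⟫_ℝ‖ₑ ≤ ‖y - x‖ₑ := by
  rw [mem_openHalfSpace] at hx
  rw [mem_openHalfSpace_neg] at hy
  have h := (neg_le_abs _).trans (abs_real_inner_le_norm e (y - x))
  rw [he, one_mul, inner_sub_right] at h
  simp only [enorm_le_iff_norm_le, Real.norm_of_nonneg hx.le, Real.norm_of_nonpos hy.le]
  constructor <;> linarith

/-- The shear `x ↦ x - ⟪e, x⟫ v`, which fixes the hyperplane orthogonal to `e`. -/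
def shear (e v : E) : E →L[ℝ] E := .id ℝ E - InnerProductSpace.rankOne ℝ v e

lemma shear_apply (e v x : E) : shear e v x = x - ⟪e, x⟫_ℝ • v := by simp [shear]

lemma shear_two_smul_apply (e v x : E) :
    shear e ((2 : ℝ) • v) x = shear e v x + (-⟪e, x⟫_ℝ) • v := by
  rw [shear_apply, shear_apply]
  module

lemma inner_shear_left (e v w x : E) : ⟪shear v e w, x⟫_ℝ = ⟪w, shear e v x⟫_ℝ := by
  simp only [shear_apply, inner_sub_left, inner_sub_right,
    real_inner_smul_right, real_inner_comm]
  ring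

lemma two_le_inner_two_smul {e v : E} (hev : 2 ≤ ⟪e, v⟫_ℝ) : 2 ≤ ⟪e, (2 : ℝ) • v⟫_ℝ := by
  rw [real_inner_smul_right]
  linarith

lemma shear_mem_openHalfSpace {e v x : E} (hv : 1 < ⟪e, v⟫_ℝ) (hx : x ∈ openHalfSpace (-e)) :
    shear e v x ∈ openHalfSpace e := by
  rw [mem_openHalfSpace_neg] at hx
  rw [mem_openHalfSpace, shear_apply, inner_sub_right, real_inner_smul_right]
  nlinarith

lemma enorm_shear_le {e : E} (he : ‖e‖ = 1) (v x : E) : ‖shear e v x‖ₑ ≤ (1 + ‖v‖ₑ) * ‖x‖ₑ := by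
  have he' : ‖e‖ₑ = 1 := by rw [← ofReal_norm, he, ENNReal.ofReal_one]
  calc ‖shear e v x‖ₑ ≤ ‖x‖ₑ + ‖⟪e, x⟫_ℝ‖ₑ * ‖v‖ₑ := by
        rw [shear_apply, ← enorm_smul]
        exact enorm_sub_le
    _ ≤ ‖x‖ₑ + ‖e‖ₑ * ‖x‖ₑ * ‖v‖ₑ := by gcongr; exact enorm_inner_le_enorm_mul_enorm e x
    _ = (1 + ‖v‖ₑ) * ‖x‖ₑ := by rw [he']; ring

lemma enorm_shear_sub_le {e x y : E} (he : ‖e‖ = 1) (v : E) (hx : x ∈ openHalfSpace e)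
    (hy : y ∈ openHalfSpace (-e)) : ‖shear e v y - x‖ₑ ≤ (1 + ‖v‖ₑ) * ‖y - x‖ₑ := by
  calc ‖shear e v y - x‖ₑ ≤ ‖y - x‖ₑ + ‖⟪e, y⟫_ℝ‖ₑ * ‖v‖ₑ := by
        rw [shear_apply, sub_right_comm, ← enorm_smul]
        exact enorm_sub_le
    _ ≤ ‖y - x‖ₑ + ‖y - x‖ₑ * ‖v‖ₑ := by gcongr; exact (enorm_inner_le_enorm_sub he hx hy).2
    _ = (1 + ‖v‖ₑ) * ‖y - x‖ₑ := by ring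

variable [MeasurableSpace E] [BorelSpace E]

lemma measurableSet_openHalfSpace (e : E) : MeasurableSet (openHalfSpace e) :=
  (isOpen_lt continuous_const (by fun_prop)).measurableSet

variable [FiniteDimensional ℝ E] (μ : Measure E) [μ.IsAddHaarMeasure]

lemma compl_openHalfSpace_ae_eq {e : E} (he : e ≠ 0) :
    ((openHalfSpace e)ᶜ : Set E) =ᵐ[μ] openHalfSpace (-e) := by
  have hker : μ (innerSL ℝ e).ker = 0 := by
    refine Measure.addHaar_submodule μ _ fun h => he ?_
    simpa using (h ▸ Submodule.mem_top : e ∈ (innerSL ℝ e).ker)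
  filter_upwards [measure_eq_zero_iff_ae_notMem.1 hker] with x hx
  have hx₀ : ⟪e, x⟫_ℝ ≠ 0 := by simpa using hx
  refine propext ?_
  change ¬ 0 < ⟪e, x⟫_ℝ ↔ x ∈ openHalfSpace (-e)
  rw [mem_openHalfSpace_neg, not_lt]
  exact ⟨fun h => h.lt_of_ne hx₀, le_of_lt⟩

lemma map_shear_le {e v : E} (hv : 2 ≤ ⟪e, v⟫_ℝ) : μ.map (shear e v) ≤ μ := by
  have hdet : LinearMap.det (shear e v : E →ₗ[ℝ] E) = 1 - ⟪e, v⟫_ℝ := by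
    have : (shear e v : E →ₗ[ℝ] E) = LinearMap.transvection (-innerₛₗ ℝ e) v := by
      ext x
      simp [shear_apply, LinearMap.transvection.apply, sub_eq_add_neg]
    rw [this, LinearMap.transvection.det]
    simp [sub_eq_add_neg]
  have hmap := Measure.map_linearMap_addHaar_eq_smul_addHaar μ (f := (shear e v : E →ₗ[ℝ] E))
    (by rw [hdet]; linarith)
  rw [ContinuousLinearMap.coe_coe] at hmap
  have habs : |(1 - ⟪e, v⟫_ℝ)⁻¹| ≤ 1 := by
    rw [abs_inv]
    exact inv_le_one_of_one_le₀ (le_abs.2 (.inr (by linarith)))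
  rw [hmap, hdet]
  calc ENNReal.ofReal |(1 - ⟪e, v⟫_ℝ)⁻¹| • μ ≤ (1 : ℝ≥0∞) • μ := by
        gcongr
        exact ENNReal.ofReal_le_one.2 habs
    _ = μ := one_smul _ _

lemma setLIntegral_comp_shear_le {e v : E} (hv : 2 ≤ ⟪e, v⟫_ℝ) {F : E → ℝ≥0∞}
    (hF : Measurable F) :
    ∫⁻ x in openHalfSpace (-e), F (shear e v x) ∂μ ≤ ∫⁻ z in openHalfSpace e, F z ∂μ := by
  calc ∫⁻ x in openHalfSpace (-e), F (shear e v x) ∂μ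
      ≤ ∫⁻ x in shear e v ⁻¹' openHalfSpace e, F (shear e v x) ∂μ :=
        lintegral_mono_set fun x hx => shear_mem_openHalfSpace (by linarith) hx
    _ = ∫⁻ z in openHalfSpace e, F z ∂μ.map (shear e v) :=
        (setLIntegral_map (measurableSet_openHalfSpace e) hF (by fun_prop)).symm
    _ ≤ ∫⁻ z in openHalfSpace e, F z ∂μ :=
        lintegral_mono' (Measure.restrict_mono subset_rfl (map_shear_le μ hv)) le_rfl

end HalfSpace

section ShearExtension

variable {e v : E} {f : E → E} {x y : E}

/-- The reflection of `f` across the hyperplane orthogonal to `e` by the shears with directions `v`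
and `2 v`. The adjoint shear `shear v e` acts on the values, and the coefficients `2, -1` solve
`a + b = 1`, `a + 2 b = 0`. -/
def shearReflection (e v : E) (f : E → E) (y : E) : E :=
  (2 : ℝ) • shear v e (f (shear e v y)) -
    shear ((2 : ℝ) • v) e (f (shear e ((2 : ℝ) • v) y))

/-- The extension of a field `f` from `openHalfSpace e`, by `shearReflection` on the opposite
half-space and by `0` on the common boundary. -/
def shearExtension (e v : E) (f : E → E) : E → E :=
  (openHalfSpace e).indicator f + (openHalfSpace (-e)).indicator (shearReflection e v f)

lemma shearExtension_of_mem (hx : x ∈ openHalfSpace e) : shearExtension e v f x = f x := by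
  simp [shearExtension, hx, (disjoint_openHalfSpace_neg e).notMem_of_mem_left hx]

lemma shearExtension_of_mem_neg (hx : x ∈ openHalfSpace (-e)) :
    shearExtension e v f x = shearReflection e v f x := by
  simp [shearExtension, hx, (disjoint_openHalfSpace_neg e).notMem_of_mem_right hx]

lemma inner_shearReflection_sub :
    ⟪shearReflection e v f y - shearReflection e v f x, y - x⟫_ℝ =
      2 * ⟪f (shear e v y) - f (shear e v x), shear e v y - shear e v x⟫_ℝ -
        ⟪f (shear e ((2 : ℝ) • v) y) - f (shear e ((2 : ℝ) • v) x),
          shear e ((2 : ℝ) • v) y - shear e ((2 : ℝ) • v) x⟫_ℝ := by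
  simp only [← map_sub, shearReflection, ← inner_shear_left, ← real_inner_smul_left,
    ← inner_sub_left]
  simp only [map_sub]
  congr 1
  module

lemma inner_shearReflection_sub_left :
    ⟪shearReflection e v f y - f x, y - x⟫_ℝ =
      2 * ⟪f (shear e v y) - f x, shear e v y - x⟫_ℝ -
        ⟪f (shear e ((2 : ℝ) • v) y) - f x, shear e ((2 : ℝ) • v) y - x⟫_ℝ -
        2 * (⟪e, x⟫_ℝ * ⟪f (shear e ((2 : ℝ) • v) y) - f (shear e v y), v⟫_ℝ) := by
  simp only [shearReflection, inner_sub_left, real_inner_smul_left, inner_shear_left]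
  generalize f (shear e v y) = a
  generalize f (shear e ((2 : ℝ) • v) y) = b
  simp only [shear_apply, inner_sub_right, real_inner_smul_right]
  ring

lemma shearExtension_ae_eq [MeasurableSpace E] [BorelSpace E] {μ : Measure E} :
    shearExtension e v f =ᵐ[μ.restrict (openHalfSpace e)] f :=
  ae_restrict_of_forall_mem (measurableSet_openHalfSpace e) fun _ => shearExtension_of_mem

variable {p q : ℝ}

lemma one_add_enorm_le_nine (hv : ‖v‖ₑ ≤ 4) : 1 + ‖v‖ₑ ≤ 9 ∧ 1 + ‖(2 : ℝ) • v‖ₑ ≤ 9 := by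
  rw [enorm_two_smul]
  constructor
  · calc 1 + ‖v‖ₑ ≤ 1 + 4 := by gcongr
      _ ≤ 9 := by norm_num
  · calc 1 + 2 * ‖v‖ₑ ≤ 1 + 2 * 4 := by gcongr
      _ = 9 := by norm_num

lemma enorm_inner_rpow_div_le (hpq : 0 ≤ p + q) {x' y' : E} (h : ‖y' - x'‖ₑ ≤ 9 * ‖y - x‖ₑ) :
    ‖⟪f y' - f x', y' - x'⟫_ℝ‖ₑ ^ p / ‖y - x‖ₑ ^ (p + q) ≤
      9 ^ (p + q) * projKernel p q f x' y' :=
  div_rpow_le_mul_div_rpow hpq (by norm_num) (by norm_num) h _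

lemma projKernel_shearReflection_le (hp : 0 < p) (hpq : 0 ≤ p + q) (he : ‖e‖ = 1)
    (hv : ‖v‖ₑ ≤ 4) (f : E → E) (x y : E) :
    projKernel p q (shearReflection e v f) x y ≤
      6 ^ p * (9 ^ (p + q) * projKernel p q f (shear e v x) (shear e v y) +
        9 ^ (p + q) *
          projKernel p q f (shear e ((2 : ℝ) • v) x) (shear e ((2 : ℝ) • v) y)) := by
  have h9 := one_add_enorm_le_nine hv
  refine (projKernel_le_of_inner_eq hp.le
    (inner_shearReflection_sub.trans (sub_eq_self.2 (mul_zero 2)).symm)).trans ?_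
  rw [enorm_zero, ENNReal.zero_rpow_of_pos hp, ENNReal.zero_div, add_zero]
  gcongr <;> refine enorm_inner_rpow_div_le hpq ?_ <;> rw [← map_sub]
  · exact (enorm_shear_le he _ _).trans (by gcongr; exact h9.1)
  · exact (enorm_shear_le he _ _).trans (by gcongr; exact h9.2)

lemma projKernel_shearExtension_le (hp : 0 < p) (hpq : 0 ≤ p + q) (he : ‖e‖ = 1)
    (hv : ‖v‖ₑ ≤ 4) (f : E → E) (hx : x ∈ openHalfSpace e) (hy : y ∈ openHalfSpace (-e)) :
    projKernel p q (shearExtension e v f) x y ≤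
      6 ^ p * (9 ^ (p + q) * projKernel p q f x (shear e v y) +
        9 ^ (p + q) * projKernel p q f x (shear e ((2 : ℝ) • v) y) +
        ‖⟪f (shear e ((2 : ℝ) • v) y) - f (shear e v y), v⟫_ℝ‖ₑ ^ p * ‖y - x‖ₑ ^ (-q)) := by
  have h9 := one_add_enorm_le_nine hv
  refine (projKernel_le_of_inner_eq hp.le (by
    rw [shearExtension_of_mem hx, shearExtension_of_mem_neg hy,
      inner_shearReflection_sub_left])).trans ?_
  gcongr
  · exact enorm_inner_rpow_div_le hpq
      ((enorm_shear_sub_le he _ hx hy).trans (by gcongr; exact h9.1))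
  · exact enorm_inner_rpow_div_le hpq
      ((enorm_shear_sub_le he _ hx hy).trans (by gcongr; exact h9.2))
  · have h₀ : ‖y - x‖ₑ ≠ 0 := by
      simpa [sub_eq_zero] using ((disjoint_openHalfSpace_neg e).ne_of_mem hx hy).symm
    calc ‖⟪e, x⟫_ℝ * ⟪f (shear e ((2 : ℝ) • v) y) - f (shear e v y), v⟫_ℝ‖ₑ ^ p /
          ‖y - x‖ₑ ^ (p + q)
        ≤ (‖y - x‖ₑ * ‖⟪f (shear e ((2 : ℝ) • v) y) - f (shear e v y), v⟫_ℝ‖ₑ) ^ p /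
            ‖y - x‖ₑ ^ (p + q) := by
          rw [enorm_mul]
          gcongr
          exact (enorm_inner_le_enorm_sub he hx hy).1
      _ = _ := by
          rw [ENNReal.mul_rpow_of_nonneg _ _ hp.le, ENNReal.rpow_add _ _ h₀ enorm_ne_top,
            ENNReal.mul_div_mul_left _ _ (by simp [h₀]) (by simp [hp.le]), ENNReal.rpow_neg,
            div_eq_mul_inv]

end ShearExtension

section Energy

variable [FiniteDimensional ℝ E] [MeasurableSpace E] [BorelSpace E]
  {μ : Measure E} [μ.IsAddHaarMeasure] {p q : ℝ} {e v : E} {f : E → E}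

lemma measurable_shearExtension (hf : Measurable f) : Measurable (shearExtension e v f) := by
  unfold shearExtension shearReflection
  exact (hf.indicator (measurableSet_openHalfSpace e)).add
    (Measurable.indicator (by fun_prop) (measurableSet_openHalfSpace (-e)))

lemma memLp_shearExtension {P : ℝ≥0∞} (hev : 2 ≤ ⟪e, v⟫_ℝ) (hf : MemLp f P μ) :
    MemLp (shearExtension e v f) P μ := by
  have hcomp {w : E} (hw : 2 ≤ ⟪e, w⟫_ℝ) : MemLp (fun y => shear w e (f (shear e w y))) P μ :=
    (shear w e).comp_memLp' ((hf.mono_measure (map_shear_le μ hw)).comp_of_map (by fun_prop))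
  refine (hf.indicator (measurableSet_openHalfSpace e)).add
    (MemLp.indicator (measurableSet_openHalfSpace (-e)) ?_)
  exact ((hcomp hev).const_smul (2 : ℝ)).sub (hcomp (two_le_inner_two_smul hev))

lemma setLIntegral_enorm_sub_rpow_neg_le (he : ‖e‖ = 1) {y : E} (hy : y ∈ openHalfSpace (-e)) :
    ∫⁻ x in openHalfSpace e, ‖y - x‖ₑ ^ (-q) ∂μ ≤
      tailMass μ q * ‖⟪e, y⟫_ℝ‖ₑ ^ (finrank ℝ E - q) := by
  have ht : 0 < ‖⟪e, y⟫_ℝ‖ := norm_pos_iff.2 (mem_openHalfSpace_neg.1 hy).ne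
  calc ∫⁻ x in openHalfSpace e, ‖y - x‖ₑ ^ (-q) ∂μ
      ≤ ∫⁻ x in (· - y) ⁻¹' {z | ‖⟪e, y⟫_ℝ‖ ≤ ‖z‖}, ‖x - y‖ₑ ^ (-q) ∂μ := by
        simp_rw [enorm_sub_rev y]
        refine lintegral_mono_set fun x hx => ?_
        simpa [enorm_le_iff_norm_le, norm_sub_rev y x] using (enorm_inner_le_enorm_sub he hx hy).2
    _ = ∫⁻ z in {z : E | ‖⟪e, y⟫_ℝ‖ ≤ ‖z‖}, ‖z‖ₑ ^ (-q) ∂μ :=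
        (measurePreserving_sub_right μ y).setLIntegral_comp_preimage
          (measurableSet_le measurable_const measurable_norm)
          (f := fun z => ‖z‖ₑ ^ (-q)) (by fun_prop)
    _ = tailMass μ q * ‖⟪e, y⟫_ℝ‖ₑ ^ (finrank ℝ E - q) := by
        rw [setLIntegral_le_norm_rpow_neg μ q ht, enorm_norm]

lemma lintegral_projKernel_comp_shear_le (hf : Measurable f) (hev : 2 ≤ ⟪e, v⟫_ℝ) :
    ∫⁻ x in openHalfSpace e, ∫⁻ y in openHalfSpace (-e), projKernel p q f x (shear e v y) ∂μ ∂μ ≤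
      projEnergy μ p q (openHalfSpace e) (openHalfSpace e) f :=
  lintegral_mono fun x => setLIntegral_comp_shear_le μ hev (F := projKernel p q f x) (by fun_prop)

lemma lintegral_projKernel_comp_shear_shear_le (hf : Measurable f) (hev : 2 ≤ ⟪e, v⟫_ℝ) :
    ∫⁻ x in openHalfSpace (-e), ∫⁻ y in openHalfSpace (-e),
        projKernel p q f (shear e v x) (shear e v y) ∂μ ∂μ ≤
      projEnergy μ p q (openHalfSpace e) (openHalfSpace e) f := by
  have hm : Measurable fun x => ∫⁻ y in openHalfSpace (-e), projKernel p q f x (shear e v y) ∂μ :=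
    Measurable.lintegral_prod_right (f := fun x y => projKernel p q f x (shear e v y))
      (by fun_prop)
  exact (setLIntegral_comp_shear_le μ hev hm).trans (lintegral_projKernel_comp_shear_le hf hev)

lemma projEnergy_shearExtension_neg_neg_le (hp : 0 < p) (hpq : 0 ≤ p + q) (he : ‖e‖ = 1)
    (hev : 2 ≤ ⟪e, v⟫_ℝ) (hv : ‖v‖ₑ ≤ 4) (hf : Measurable f) :
    projEnergy μ p q (openHalfSpace (-e)) (openHalfSpace (-e)) (shearExtension e v f) ≤
      6 ^ p * (2 * 9 ^ (p + q) * projEnergy μ p q (openHalfSpace e) (openHalfSpace e) f) := by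
  set U := openHalfSpace e
  set L := openHalfSpace (-e)
  have hL : MeasurableSet L := measurableSet_openHalfSpace (-e)
  have h9 : (9 : ℝ≥0∞) ^ (p + q) ≠ ∞ := by simp
  have h6 : (6 : ℝ≥0∞) ^ p ≠ ∞ := by simp
  calc projEnergy μ p q L L (shearExtension e v f)
      = projEnergy μ p q L L (shearReflection e v f) := by
        have : shearExtension e v f =ᵐ[μ.restrict L] shearReflection e v f :=
          ae_restrict_of_forall_mem hL fun x => shearExtension_of_mem_neg
        exact projEnergy_congr_ae this this
    _ ≤ ∫⁻ x in L, ∫⁻ y in L,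
          6 ^ p * (9 ^ (p + q) * projKernel p q f (shear e v x) (shear e v y) +
            9 ^ (p + q) *
              projKernel p q f (shear e ((2 : ℝ) • v) x) (shear e ((2 : ℝ) • v) y)) ∂μ ∂μ :=
        lintegral_mono fun x => lintegral_mono fun y =>
          projKernel_shearReflection_le hp hpq he hv f x y
    _ = 6 ^ p * (9 ^ (p + q) *
            (∫⁻ x in L, ∫⁻ y in L, projKernel p q f (shear e v x) (shear e v y) ∂μ ∂μ) +
          9 ^ (p + q) * ∫⁻ x in L, ∫⁻ y in L,
            projKernel p q f (shear e ((2 : ℝ) • v) x) (shear e ((2 : ℝ) • v) y) ∂μ ∂μ) := by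
        simp_rw [lintegral_const_mul' _ _ h6]
        rw [lintegral_lintegral_add (by fun_prop)]
        simp_rw [lintegral_const_mul' _ _ h9]
    _ ≤ 6 ^ p * (9 ^ (p + q) * projEnergy μ p q U U f + 9 ^ (p + q) * projEnergy μ p q U U f) := by
        gcongr
        · exact lintegral_projKernel_comp_shear_shear_le hf hev
        · exact lintegral_projKernel_comp_shear_shear_le hf (two_le_inner_two_smul hev)
    _ = _ := by ring

/-- The error of `shearReflection` across the boundary: the oscillation of `f` in the direction `v`
between the two reflected points, weighted by the distance to the boundary. -/
def shearDefect (μ : Measure E) (p q : ℝ) (e : E) (f : E → E) (v : E) : ℝ≥0∞ :=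
  ∫⁻ y in openHalfSpace (-e),
    ‖⟪f (shear e ((2 : ℝ) • v) y) - f (shear e v y), v⟫_ℝ‖ₑ ^ p *
      ‖⟪e, y⟫_ℝ‖ₑ ^ (finrank ℝ E - q) ∂μ

lemma lintegral_mul_enorm_sub_rpow_neg_le (he : ‖e‖ = 1) {H : E → ℝ≥0∞} (hH : Measurable H) :
    ∫⁻ x in openHalfSpace e, ∫⁻ y in openHalfSpace (-e), H y * ‖y - x‖ₑ ^ (-q) ∂μ ∂μ ≤
      tailMass μ q *
        ∫⁻ y in openHalfSpace (-e), H y * ‖⟪e, y⟫_ℝ‖ₑ ^ (finrank ℝ E - q) ∂μ := by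
  rw [lintegral_lintegral_swap (by fun_prop), ← lintegral_const_mul _ (by fun_prop)]
  refine setLIntegral_mono (by fun_prop) fun y hy => ?_
  rw [lintegral_const_mul _ (by fun_prop), mul_left_comm]
  gcongr
  exact setLIntegral_enorm_sub_rpow_neg_le he hy

lemma projEnergy_shearExtension_neg_le (hp : 0 < p) (hpq : 0 ≤ p + q) (he : ‖e‖ = 1)
    (hev : 2 ≤ ⟪e, v⟫_ℝ) (hv : ‖v‖ₑ ≤ 4) (hf : Measurable f) :
    projEnergy μ p q (openHalfSpace e) (openHalfSpace (-e)) (shearExtension e v f) ≤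
      6 ^ p * (2 * 9 ^ (p + q) * projEnergy μ p q (openHalfSpace e) (openHalfSpace e) f +
        tailMass μ q * shearDefect μ p q e f v) := by
  set U := openHalfSpace e
  set L := openHalfSpace (-e)
  have h9 : (9 : ℝ≥0∞) ^ (p + q) ≠ ∞ := by simp
  have h6 : (6 : ℝ≥0∞) ^ p ≠ ∞ := by simp
  calc projEnergy μ p q U L (shearExtension e v f)
      ≤ ∫⁻ x in U, ∫⁻ y in L,
          6 ^ p * (9 ^ (p + q) * projKernel p q f x (shear e v y) +
            9 ^ (p + q) * projKernel p q f x (shear e ((2 : ℝ) • v) y) +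
            ‖⟪f (shear e ((2 : ℝ) • v) y) - f (shear e v y), v⟫_ℝ‖ₑ ^ p *
              ‖y - x‖ₑ ^ (-q)) ∂μ ∂μ :=
        setLIntegral_mono' (measurableSet_openHalfSpace e) fun x hx =>
          setLIntegral_mono' (measurableSet_openHalfSpace (-e)) fun y hy =>
            projKernel_shearExtension_le hp hpq he hv f hx hy
    _ = 6 ^ p * (9 ^ (p + q) *
            (∫⁻ x in U, ∫⁻ y in L, projKernel p q f x (shear e v y) ∂μ ∂μ) +
          9 ^ (p + q) *
            (∫⁻ x in U, ∫⁻ y in L, projKernel p q f x (shear e ((2 : ℝ) • v) y) ∂μ ∂μ) +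
          ∫⁻ x in U, ∫⁻ y in L,
            ‖⟪f (shear e ((2 : ℝ) • v) y) - f (shear e v y), v⟫_ℝ‖ₑ ^ p *
              ‖y - x‖ₑ ^ (-q) ∂μ ∂μ) := by
        simp_rw [lintegral_const_mul' _ _ h6]
        rw [lintegral_lintegral_add (by fun_prop), lintegral_lintegral_add (by fun_prop)]
        simp_rw [lintegral_const_mul' _ _ h9]
    _ ≤ 6 ^ p * (9 ^ (p + q) * projEnergy μ p q U U f + 9 ^ (p + q) * projEnergy μ p q U U f +
          tailMass μ q * shearDefect μ p q e f v) := by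
        gcongr
        · exact lintegral_projKernel_comp_shear_le hf hev
        · exact lintegral_projKernel_comp_shear_le hf (two_le_inner_two_smul hev)
        · exact lintegral_mul_enorm_sub_rpow_neg_le he (by fun_prop)
    _ = _ := by ring

end Energy

section Averaging

lemma two_le_inner_and_enorm_le_of_mem_ball {e v : E} (he : ‖e‖ = 1)
    (hv : v ∈ Metric.ball ((3 : ℝ) • e) 1) : 2 ≤ ⟪e, v⟫_ℝ ∧ ‖v‖ₑ ≤ 4 := by
  have hdist : ‖v - (3 : ℝ) • e‖ < 1 := mem_ball_iff_norm.1 hv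
  constructor
  · have h := (neg_le_abs _).trans (abs_real_inner_le_norm e (v - (3 : ℝ) • e))
    rw [inner_sub_right, real_inner_smul_right, real_inner_self_eq_norm_sq, he] at h
    linarith
  · have h := norm_le_norm_add_norm_sub' v ((3 : ℝ) • e)
    rw [norm_smul, he, Real.norm_ofNat] at h
    rw [← ofReal_norm]
    exact ENNReal.ofReal_le_of_le_toReal (by rw [ENNReal.toReal_ofNat]; linarith)

variable {p q : ℝ} {e : E} {f : E → E}

lemma enorm_inner_shear_rpow_mul_le (hp : 0 ≤ p) (hpq : 0 ≤ p + q) {v : E} (hv : ‖v‖ₑ ≤ 4) {y : E}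
    (hy : ⟪e, y⟫_ℝ ≠ 0) (n : ℝ) :
    ‖⟪f (shear e ((2 : ℝ) • v) y) - f (shear e v y), v⟫_ℝ‖ₑ ^ p * ‖⟪e, y⟫_ℝ‖ₑ ^ (n - q) ≤
      4 ^ (p + q) * (‖⟪e, y⟫_ℝ‖ₑ ^ n *
        projKernel p q f (shear e v y) (shear e ((2 : ℝ) • v) y)) := by
  rw [← enorm_neg ⟪e, y⟫_ℝ]
  set t := -⟪e, y⟫_ℝ with ht
  set Δ := f (shear e ((2 : ℝ) • v) y) - f (shear e v y)
  have ht₀ : ‖t‖ₑ ≠ 0 := by simpa [ht] using hy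
  have hsub : shear e ((2 : ℝ) • v) y - shear e v y = t • v := by
    rw [shear_two_smul_apply, add_sub_cancel_left]
  have hnorm : ‖t • v‖ₑ ≤ 4 * ‖t‖ₑ := by
    rw [enorm_smul, mul_comm]
    gcongr
  have hsplit : ‖t‖ₑ ^ (n - q) = ‖t‖ₑ ^ n * (‖t‖ₑ ^ p * ‖t‖ₑ ^ (-(p + q))) := by
    rw [← ENNReal.rpow_add _ _ ht₀ enorm_ne_top, ← ENNReal.rpow_add _ _ ht₀ enorm_ne_top]
    ring_nf
  calc ‖⟪Δ, v⟫_ℝ‖ₑ ^ p * ‖t‖ₑ ^ (n - q)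
      = ‖t‖ₑ ^ n * (‖⟪Δ, t • v⟫_ℝ‖ₑ ^ p / ‖t‖ₑ ^ (p + q)) := by
        rw [real_inner_smul_right, enorm_mul, ENNReal.mul_rpow_of_nonneg _ _ hp, hsplit,
          ENNReal.rpow_neg, div_eq_mul_inv]
        ring
    _ ≤ ‖t‖ₑ ^ n * (4 ^ (p + q) * (‖⟪Δ, t • v⟫_ℝ‖ₑ ^ p / ‖t • v‖ₑ ^ (p + q))) := by
        gcongr
        exact div_rpow_le_mul_div_rpow hpq (by norm_num) (by norm_num) hnorm _
    _ = 4 ^ (p + q) * (‖t‖ₑ ^ n *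
          projKernel p q f (shear e v y) (shear e ((2 : ℝ) • v) y)) := by
        rw [projKernel, hsub]
        ring

variable [FiniteDimensional ℝ E] [MeasurableSpace E] [BorelSpace E]
  {μ : Measure E} [μ.IsAddHaarMeasure]

lemma setLIntegral_ball_enorm_inner_le (hp : 0 ≤ p) (hpq : 0 ≤ p + q) (he : ‖e‖ = 1)
    (hf : Measurable f) {y : E} (hy : y ∈ openHalfSpace (-e)) :
    ∫⁻ v in Metric.ball ((3 : ℝ) • e) 1,
        ‖⟪f (shear e ((2 : ℝ) • v) y) - f (shear e v y), v⟫_ℝ‖ₑ ^ p *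
          ‖⟪e, y⟫_ℝ‖ₑ ^ (finrank ℝ E - q) ∂μ ≤
      4 ^ (p + q) * ∫⁻ z, (openHalfSpace e ×ˢ openHalfSpace e).indicator
        (Function.uncurry (projKernel p q f)) (y + z, y + z + z) ∂μ := by
  set F := (openHalfSpace e ×ˢ openHalfSpace e).indicator (Function.uncurry (projKernel p q f))
    with hFdef
  have hF : Measurable F := Measurable.indicator (by fun_prop)
    ((measurableSet_openHalfSpace e).prod (measurableSet_openHalfSpace e))
  set t := -⟪e, y⟫_ℝ with ht
  have hy₀ : ⟪e, y⟫_ℝ ≠ 0 := (mem_openHalfSpace_neg.1 hy).ne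
  have hshear (v : E) : shear e v y = y + t • v := by
    rw [shear_apply, ht, neg_smul, sub_eq_add_neg]
  have hpt : ∀ v ∈ Metric.ball ((3 : ℝ) • e) 1,
      ‖⟪f (shear e ((2 : ℝ) • v) y) - f (shear e v y), v⟫_ℝ‖ₑ ^ p *
          ‖⟪e, y⟫_ℝ‖ₑ ^ (finrank ℝ E - q) ≤
        4 ^ (p + q) * (‖t‖ₑ ^ (finrank ℝ E : ℝ) * F (y + t • v, y + t • v + t • v)) := by
    intro v hv
    obtain ⟨hev, hv⟩ := two_le_inner_and_enorm_le_of_mem_ball he hv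
    have hmem := mk_mem_prod (shear_mem_openHalfSpace (one_lt_two.trans_le hev) hy)
      (shear_mem_openHalfSpace (one_lt_two.trans_le (two_le_inner_two_smul hev)) hy)
    rw [← hshear, ← shear_two_smul_apply, enorm_neg, hFdef, indicator_of_mem hmem]
    exact enorm_inner_shear_rpow_mul_le hp hpq hv hy₀ _
  calc _ ≤ ∫⁻ v in Metric.ball ((3 : ℝ) • e) 1,
          4 ^ (p + q) * (‖t‖ₑ ^ (finrank ℝ E : ℝ) * F (y + t • v, y + t • v + t • v)) ∂μ :=
        setLIntegral_mono' measurableSet_ball hpt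
    _ ≤ ∫⁻ v, 4 ^ (p + q) * (‖t‖ₑ ^ (finrank ℝ E : ℝ) * F (y + t • v, y + t • v + t • v)) ∂μ :=
        setLIntegral_le_lintegral _ _
    _ = 4 ^ (p + q) * ∫⁻ z, F (y + z, y + z + z) ∂μ := by
        rw [lintegral_const_mul _ (by fun_prop), lintegral_const_mul _ (by fun_prop),
          enorm_rpow_finrank_mul_lintegral_comp_smul μ (neg_ne_zero.2 hy₀)
            (F := fun z => F (y + z, y + z + z)) (by fun_prop)]

lemma setLIntegral_ball_shearDefect_le (hp : 0 ≤ p) (hpq : 0 ≤ p + q) (he : ‖e‖ = 1)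
    (hf : Measurable f) :
    ∫⁻ v in Metric.ball ((3 : ℝ) • e) 1, shearDefect μ p q e f v ∂μ ≤
      4 ^ (p + q) * projEnergy μ p q (openHalfSpace e) (openHalfSpace e) f := by
  have hU := measurableSet_openHalfSpace e
  set F := (openHalfSpace e ×ˢ openHalfSpace e).indicator (Function.uncurry (projKernel p q f))
  have hF : Measurable F := Measurable.indicator (by fun_prop) (hU.prod hU)
  calc ∫⁻ v in Metric.ball ((3 : ℝ) • e) 1, shearDefect μ p q e f v ∂μ
      = ∫⁻ y in openHalfSpace (-e), ∫⁻ v in Metric.ball ((3 : ℝ) • e) 1,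
          ‖⟪f (shear e ((2 : ℝ) • v) y) - f (shear e v y), v⟫_ℝ‖ₑ ^ p *
            ‖⟪e, y⟫_ℝ‖ₑ ^ (finrank ℝ E - q) ∂μ ∂μ := by
        refine lintegral_lintegral_swap (Measurable.aemeasurable ?_)
        simp only [Function.uncurry_def, shear_apply]
        fun_prop
    _ ≤ ∫⁻ y in openHalfSpace (-e), 4 ^ (p + q) * ∫⁻ z, F (y + z, y + z + z) ∂μ ∂μ :=
        setLIntegral_mono' (measurableSet_openHalfSpace _) fun y hy =>
          setLIntegral_ball_enorm_inner_le hp hpq he hf hy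
    _ ≤ ∫⁻ y, 4 ^ (p + q) * ∫⁻ z, F (y + z, y + z + z) ∂μ ∂μ := setLIntegral_le_lintegral _ _
    _ = 4 ^ (p + q) * ∫⁻ y, ∫⁻ z, F (y + z, y + z + z) ∂μ ∂μ :=
        lintegral_const_mul' _ _ (by simp)
    _ = _ := by rw [lintegral_lintegral_comp_add_add hF, lintegral_indicator_prod_projKernel hU hU]

end Averaging

section Extension

variable [FiniteDimensional ℝ E] [MeasurableSpace E] [BorelSpace E]
  {p q : ℝ} {e : E} {f : E → E}

lemma measurable_shearDefect {μ : Measure E} [SFinite μ] (hf : Measurable f) :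
    Measurable (shearDefect μ p q e f) := by
  refine Measurable.lintegral_prod_right (f := fun v y =>
    ‖⟪f (shear e ((2 : ℝ) • v) y) - f (shear e v y), v⟫_ℝ‖ₑ ^ p *
      ‖⟪e, y⟫_ℝ‖ₑ ^ (finrank ℝ E - q)) ?_
  simp only [Function.uncurry_def, shear_apply]
  fun_prop

variable (μ : Measure E) [μ.IsAddHaarMeasure]

lemma exists_shearDefect_le (hp : 0 ≤ p) (hpq : 0 ≤ p + q) (he : ‖e‖ = 1) (hf : Measurable f) :
    ∃ v : E, 2 ≤ ⟪e, v⟫_ℝ ∧ ‖v‖ₑ ≤ 4 ∧ shearDefect μ p q e f v ≤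
      4 ^ (p + q) * projEnergy μ p q (openHalfSpace e) (openHalfSpace e) f /
        μ (Metric.ball ((3 : ℝ) • e) 1) := by
  obtain ⟨v, hv, hle⟩ := exists_le_setLAverage (Metric.measure_ball_pos μ _ one_pos).ne'
    measure_ball_lt_top.ne (measurable_shearDefect (μ := μ) (p := p) (q := q) hf).aemeasurable
  obtain ⟨hev, hv⟩ := two_le_inner_and_enorm_le_of_mem_ball he hv
  refine ⟨v, hev, hv, hle.trans ?_⟩
  rw [setLAverage_eq]
  gcongr
  exact setLIntegral_ball_shearDefect_le hp hpq he hf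

lemma projEnergy_shearExtension_univ_eq {v : E} (he : e ≠ 0) (hf : Measurable f) :
    projEnergy μ p q univ univ (shearExtension e v f) =
      projEnergy μ p q (openHalfSpace e) (openHalfSpace e) f +
        2 * projEnergy μ p q (openHalfSpace e) (openHalfSpace (-e)) (shearExtension e v f) +
        projEnergy μ p q (openHalfSpace (-e)) (openHalfSpace (-e)) (shearExtension e v f) := by
  rw [projEnergy_univ_eq_add (measurable_shearExtension hf) (measurableSet_openHalfSpace e),
    projEnergy_congr_ae shearExtension_ae_eq shearExtension_ae_eq]
  simp only [projEnergy, Measure.restrict_congr_set (compl_openHalfSpace_ae_eq μ he)]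

lemma exists_projEnergy_shearExtension_le (hp : 0 < p) (hq : finrank ℝ E < q) (he : ‖e‖ = 1) :
    ∃ C : ℝ≥0, ∀ f : E → E, Measurable f → ∃ v : E, 2 ≤ ⟪e, v⟫_ℝ ∧
      projEnergy μ p q univ univ (shearExtension e v f) ≤
        C * projEnergy μ p q (openHalfSpace e) (openHalfSpace e) f := by
  have hpq : 0 ≤ p + q := add_nonneg hp.le ((Nat.cast_nonneg _).trans hq.le)
  set m := μ (Metric.ball ((3 : ℝ) • e) 1)
  have hm : m⁻¹ ≠ ∞ := ENNReal.inv_ne_top.2 (Metric.measure_ball_pos μ _ one_pos).ne'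
  let C : ℝ≥0∞ := 1 + 2 * (6 ^ p * (2 * 9 ^ (p + q) + tailMass μ q * (4 ^ (p + q) * m⁻¹))) +
    6 ^ p * (2 * 9 ^ (p + q))
  have hC : C ≠ ∞ := by finiteness [(tailMass_lt_top μ hq).ne]
  refine ⟨C.toNNReal, fun f hf => ?_⟩
  obtain ⟨v, hev, hv, hdefect⟩ := exists_shearDefect_le μ hp.le hpq he hf
  refine ⟨v, hev, ?_⟩
  have he₀ : e ≠ 0 := norm_ne_zero_iff.1 (by simp [he])
  rw [ENNReal.coe_toNNReal hC, projEnergy_shearExtension_univ_eq μ he₀ hf]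
  set G := projEnergy μ p q (openHalfSpace e) (openHalfSpace e) f
  calc _ ≤ G + 2 * (6 ^ p * (2 * 9 ^ (p + q) * G + tailMass μ q * (4 ^ (p + q) * G / m))) +
          6 ^ p * (2 * 9 ^ (p + q) * G) := by
        gcongr
        · exact (projEnergy_shearExtension_neg_le hp hpq he hev hv hf).trans (by gcongr)
        · exact projEnergy_shearExtension_neg_neg_le hp hpq he hev hv hf
    _ = C * G := by
        simp only [C, div_eq_mul_inv]
        ring

theorem exists_extension_projEnergy_le (hp : 0 < p) (hq : finrank ℝ E < q) (he : ‖e‖ = 1)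
    (P : ℝ≥0∞) :
    ∃ C : ℝ≥0, ∀ f : E → E, MemLp f P (μ.restrict (openHalfSpace e)) →
      ∃ g : E → E, MemLp g P μ ∧ g =ᵐ[μ.restrict (openHalfSpace e)] f ∧
        projEnergy μ p q univ univ g ≤
          C * projEnergy μ p q (openHalfSpace e) (openHalfSpace e) f := by
  obtain ⟨C, hC⟩ := exists_projEnergy_shearExtension_le μ hp hq he
  have hU := measurableSet_openHalfSpace e
  refine ⟨C, fun f hf => ?_⟩
  set f' := (openHalfSpace e).indicator (hf.1.mk f)
  have hf' : Measurable f' := hf.1.stronglyMeasurable_mk.measurable.indicator hU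
  have hff' : f' =ᵐ[μ.restrict (openHalfSpace e)] f :=
    (indicator_ae_eq_restrict hU).trans hf.1.ae_eq_mk.symm
  have hLp : MemLp f' P μ := (memLp_indicator_iff_restrict hU).2 (hf.ae_eq hf.1.ae_eq_mk)
  obtain ⟨v, hev, hle⟩ := hC f' hf'
  refine ⟨shearExtension e v f', memLp_shearExtension hev hLp, ?_, ?_⟩
  · exact shearExtension_ae_eq.trans hff'
  · rwa [← projEnergy_congr_ae hff' hff']

end Extension

section EuclideanSpace

lemma upperHalf_eq_openHalfSpace (d : ℕ) :
    upperHalf d = openHalfSpace (EuclideanSpace.single (Fin.last d) 1) := by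
  ext x
  simp [upperHalf, mem_openHalfSpace, EuclideanSpace.inner_single_left]

variable {d : ℕ} {p s : ℝ}

lemma projGagP_eq_projEnergy (hp : 0 < p) (Ω : Set (Ed d)) (f : Ed d → Ed d) :
    projGagP d s p Ω f = projEnergy volume p (d + s * p) Ω Ω f := by
  simp only [projGagP, projEnergy, projKernel_eq_ofReal hp]

lemma projGagP_lt_top (hp : 0 < p) (hs : s ∈ Ioo (0 : ℝ) 1) {Ω : Set (Ed (d + 1))}
    {f : Ed (d + 1) → Ed (d + 1)} (hf : ContDiff ℝ 1 f) (hc : HasCompactSupport f) :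
    projGagP (d + 1) s p Ω f < ∞ := by
  obtain ⟨K, hK⟩ := ContDiff.lipschitzWith_of_hasCompactSupport hc hf one_ne_zero
  rw [projGagP_eq_projEnergy hp]
  refine (projEnergy_mono (subset_univ _) (subset_univ _)).trans_lt
    (projEnergy_lt_top hp ?_ ?_ hK hc)
  · simpa using mul_pos hs.1 hp
  · simpa using mul_lt_of_lt_one_left hp hs.2

end EuclideanSpace

theorem halfspace_extension_proj_seminorm_general (d : ℕ) (p s : ℝ) (hp : 0 < p) (hs : 0 < s) :
    ∃ C : ℝ, 0 < C ∧
      ∀ f : Ed (d + 1) → Ed (d + 1),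
        MemLp f (ENNReal.ofReal p) (volume.restrict (upperHalf d)) →
        projGagP (d + 1) s p (upperHalf d) f < ∞ →
        ∃ g : Ed (d + 1) → Ed (d + 1),
          MemLp g (ENNReal.ofReal p) volume ∧
          (∀ᵐ x ∂(volume : Measure (Ed (d + 1))), x ∈ upperHalf d → g x = f x) ∧
          projGagP (d + 1) s p Set.univ g < ∞ ∧
          projSem (d + 1) s p Set.univ g ≤
            ENNReal.ofReal C * projSem (d + 1) s p (upperHalf d) f := by
  have hq : finrank ℝ (Ed (d + 1)) < ((d + 1 : ℕ) : ℝ) + s * p := by simpa using mul_pos hs hp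
  obtain ⟨C, hC⟩ := exists_extension_projEnergy_le volume hp hq
    (e := EuclideanSpace.single (Fin.last d) 1) (by simp) (ENNReal.ofReal p)
  simp_rw [← upperHalf_eq_openHalfSpace, ← projGagP_eq_projEnergy hp] at hC
  refine ⟨((C + 1 : ℝ≥0) ^ (1 / p) : ℝ≥0), by positivity, fun f hf hfin => ?_⟩
  obtain ⟨g, hg, hgf, hle⟩ := hC f hf
  have hU : MeasurableSet (upperHalf d) :=
    upperHalf_eq_openHalfSpace d ▸ measurableSet_openHalfSpace _
  refine ⟨g, hg, (ae_restrict_iff' hU).1 hgf, hle.trans_lt (by finiteness), ?_⟩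
  rw [ENNReal.ofReal_coe_nnreal, ENNReal.coe_rpow_of_nonneg _ (by positivity), projSem, projSem,
    ← ENNReal.mul_rpow_of_nonneg _ _ (by positivity)]
  gcongr
  exact hle.trans (by gcongr; simp)

/-- **Extension from the half-space controlling the projected seminorm.**
Let `p ∈ [1,∞)`, `s ∈ (0,1)` with `ps ≠ 1`. There is `C = C(p,d,s) > 0` such that for
every `f ∈ C_c^∞(ℝ^{d+1}_+; ℝ^{d+1})` there exists `g ∈ L^p(ℝ^{d+1}; ℝ^{d+1})` with
`g = f` a.e. on `ℝ^{d+1}_+`, `[g]_{𝒳^s_p(ℝ^{d+1})} < ∞` and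
`[g]_{𝒳^s_p(ℝ^{d+1})} ≤ C [f]_{𝒳^s_p(ℝ^{d+1}_+)}`. (The dimension is written as `d + 1`,
realizing an arbitrary dimension `≥ 1`.) -/
theorem halfspace_extension_proj_seminorm (d : ℕ) (p s : ℝ) (hp : 1 ≤ p)
    (hs : s ∈ Set.Ioo (0 : ℝ) 1) (hps : p * s ≠ 1) :
    ∃ C : ℝ, 0 < C ∧
      ∀ f : Ed (d + 1) → Ed (d + 1),
        ContDiff ℝ (⊤ : ℕ∞) f → HasCompactSupport f → tsupport f ⊆ upperHalf d →
        ∃ g : Ed (d + 1) → Ed (d + 1),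
          MemLp g (ENNReal.ofReal p) volume ∧
          (∀ᵐ x ∂(volume : Measure (Ed (d + 1))), x ∈ upperHalf d → g x = f x) ∧
          projGagP (d + 1) s p Set.univ g < ∞ ∧
          projSem (d + 1) s p Set.univ g ≤
            ENNReal.ofReal C * projSem (d + 1) s p (upperHalf d) f := by
  obtain ⟨C, hC, h⟩ := halfspace_extension_proj_seminorm_general d p s (by linarith) hs.1
  exact ⟨C, hC, fun f hf hc _ => h f ((hf.continuous.memLp_of_hasCompactSupport hc).restrict _)
    (projGagP_lt_top (by linarith) hs (hf.of_le (by simp)) hc)⟩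
end
end

section
/- Fractional Korn inequality on the half-space: Let s ∈ (0,1), 1 < p < ∞ with sp ≠ 1, and let ℝ^d_+ = {x ∈ ℝ^d : x_d > 0}. Then there exists a constant C = C(d,p,s) > 0 such that for every smooth compactly supported vector field f ∈ C_c^∞(ℝ^d_+; ℝ^d), ∫_{ℝ^d_+} ∫_{ℝ^d_+} |f(x) − f(y)|^p / |x − y|^{d+sp} dx dy ≤ C ∫_{ℝ^d_+} ∫_{ℝ^d_+} |((f(x) − f(y)) · (x − y)/|x − y|)|^p / |x − y|^{d+sp} dx dy. -/
/-!
For three points `x`, `y`, `z` one has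
`⟪z - x, f y - f x⟫ = ⟪f z - f x, z - x⟫ - ⟪f z - f y, z - y⟫ - ⟪f z - f y, y - x⟫`,
where the first two terms on the right only involve projected differences. Averaging over `z` in a
ball of radius comparable to `t = κ ‖y - x‖`, inside a cone of the domain with apex `x`, bounds
`‖f y - f x‖ ^ p` by averages of projected differences, plus averages of full differences with the
factor `κ ^ (-p)` gained from `‖y - x‖ / t = 1 / κ`. By Tonelli each average costs at most
`κ ^ (s p)` when it is integrated against the Gagliardo kernel. The full differences therefore
return with the factor `κ ^ (s p - p)`, which is small for large `κ`, and they can be absorbed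
because the energy is finite.
-/

open MeasureTheory Filter Set
open scoped ENNReal NNReal Topology

noncomputable section

lemma le_two_mul_of_le_add_half_mul {a b : ℝ≥0∞} (ha : a ≠ ∞) (h : a ≤ b + 2⁻¹ * a) :
    a ≤ 2 * b := by
  have half_ne_top : 2⁻¹ * a ≠ ∞ := ENNReal.mul_ne_top (by simp) ha
  have half_le : 2⁻¹ * a ≤ b := by
    refine (ENNReal.add_le_add_iff_right half_ne_top).1 (le_trans (le_of_eq ?_) h)
    rw [← add_mul, ENNReal.inv_two_add_inv_two, one_mul]
  calc a = 2 * (2⁻¹ * a) := by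
        rw [← mul_assoc, ENNReal.mul_inv_cancel two_ne_zero ENNReal.ofNat_ne_top, one_mul]
    _ ≤ 2 * b := by gcongr

lemma exists_one_le_mul_rpow_neg_le_half {K : ℝ≥0∞} (hK : K ≠ ∞) {a : ℝ} (ha : 0 < a) :
    ∃ κ : ℝ≥0, 1 ≤ κ ∧ K * (κ : ℝ≥0∞) ^ (-a) ≤ 2⁻¹ := by
  lift K to ℝ≥0 using hK
  refine ⟨(1 + 2 * K) ^ a⁻¹, NNReal.one_le_rpow le_self_add (by positivity), ?_⟩
  rw [ENNReal.rpow_neg, ← ENNReal.coe_rpow_of_nonneg _ ha.le, NNReal.rpow_inv_rpow ha.ne',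
    ← div_eq_mul_inv, ENNReal.div_le_iff (by simp) ENNReal.coe_ne_top]
  calc (K : ℝ≥0∞) = 2⁻¹ * (2 * K) := by
        rw [← mul_assoc, ENNReal.inv_mul_cancel two_ne_zero ENNReal.ofNat_ne_top, one_mul]
    _ ≤ 2⁻¹ * ((1 + 2 * K : ℝ≥0) : ℝ≥0∞) := by
        push_cast
        gcongr
        exact le_add_self

lemma mul_rpow_mul_inv_mul_rpow_neg {κ r V : ℝ≥0∞} {a : ℝ} (q : ℝ) (ha : 0 ≤ a) (hκ : κ ≠ 0)
    (hκ' : κ ≠ ∞) (hr : r ≠ 0) (hr' : r ≠ ∞) (hV : V ≠ 0) (hV' : V ≠ ∞) :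
    (κ * r) ^ a * V * (V⁻¹ * κ ^ (-a) * r ^ (-(a + q))) = r ^ (-q) := by
  calc (κ * r) ^ a * V * (V⁻¹ * κ ^ (-a) * r ^ (-(a + q)))
      = V * V⁻¹ * (κ ^ a * κ ^ (-a)) * (r ^ a * r ^ (-(a + q))) := by
        rw [ENNReal.mul_rpow_of_nonneg _ _ ha]; ring
    _ = r ^ (-q) := by
        rw [ENNReal.mul_inv_cancel hV hV', ← ENNReal.rpow_add _ _ hκ hκ',
          ← ENNReal.rpow_add _ _ hr hr', add_neg_cancel, ENNReal.rpow_zero, one_mul, one_mul,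
          neg_add, add_neg_cancel_left]

section DoubleIntegrals

variable {α : Type*} [MeasurableSpace α] {ν : Measure α} [SFinite ν] {Φ : α → α → ℝ≥0∞}

lemma lintegral_lintegral_const_mul (a : ℝ≥0∞) (hΦ : Measurable (Function.uncurry Φ)) :
    ∫⁻ x, ∫⁻ y, a * Φ x y ∂ν ∂ν = a * ∫⁻ x, ∫⁻ y, Φ x y ∂ν ∂ν := by
  rw [← lintegral_const_mul _ hΦ.lintegral_prod_right]
  exact lintegral_congr fun x => lintegral_const_mul _ hΦ.of_uncurry_left

lemma lintegral_lintegral_add_s16 (hΦ : Measurable (Function.uncurry Φ)) (Ψ : α → α → ℝ≥0∞) :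
    ∫⁻ x, ∫⁻ y, (Φ x y + Ψ x y) ∂ν ∂ν =
      (∫⁻ x, ∫⁻ y, Φ x y ∂ν ∂ν) + ∫⁻ x, ∫⁻ y, Ψ x y ∂ν ∂ν := by
  rw [← lintegral_add_left hΦ.lintegral_prod_right]
  exact lintegral_congr fun x => lintegral_add_left hΦ.of_uncurry_left _

lemma lintegral_lintegral_le_add_of_le_add_swap {F Ψ : α → α → ℝ≥0∞}
    (hΦ : Measurable (Function.uncurry Φ)) (hΨ : Measurable (Function.uncurry Ψ))
    (h : ∀ᵐ x ∂ν, ∀ y, F x y ≤ Φ x y + Ψ y x) :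
    ∫⁻ x, ∫⁻ y, F x y ∂ν ∂ν ≤ (∫⁻ x, ∫⁻ y, Φ x y ∂ν ∂ν) + ∫⁻ x, ∫⁻ y, Ψ x y ∂ν ∂ν := by
  calc ∫⁻ x, ∫⁻ y, F x y ∂ν ∂ν ≤ ∫⁻ x, ∫⁻ y, (Φ x y + Ψ y x) ∂ν ∂ν :=
        lintegral_mono_ae (h.mono fun x hx => lintegral_mono hx)
    _ = _ := by
        rw [lintegral_lintegral_add_s16 hΦ, lintegral_lintegral_swap hΨ.aemeasurable]

lemma lintegral_lintegral_indicator_one_mul_comp_sub {G : Type*} [AddGroup G] [MeasurableSpace G]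
    [MeasurableAdd G] (μ : Measure G) [μ.IsAddRightInvariant] {S : Set G} (hS : MeasurableSet S)
    {k : G → ℝ≥0∞} (hk : Measurable k) :
    ∫⁻ x, ∫⁻ y, S.indicator 1 x * k (y - x) ∂μ ∂μ = μ S * ∫⁻ h, k h ∂μ := by
  have inner_eq (x : G) :
      ∫⁻ y, S.indicator 1 x * k (y - x) ∂μ = S.indicator 1 x * ∫⁻ h, k h ∂μ := by
    rw [lintegral_const_mul _ (by simp only [sub_eq_add_neg]; fun_prop),
      lintegral_sub_right_eq_self k x]
  simp_rw [inner_eq]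
  rw [lintegral_mul_const _ (measurable_one.indicator hS), lintegral_indicator_one hS]

end DoubleIntegrals

section PowerIntegrals

variable {E : Type*} [NormedAddCommGroup E] [NormedSpace ℝ E] [FiniteDimensional ℝ E]
  [MeasurableSpace E] [BorelSpace E] (μ : Measure E) [μ.IsAddHaarMeasure]

local notation "dim" => Module.finrank ℝ

lemma lintegral_comp_smul_addHaar {R : ℝ≥0} (hR : R ≠ 0) {g : E → ℝ≥0∞} (hg : Measurable g) :
    ∫⁻ x, g ((R : ℝ) • x) ∂μ = (R : ℝ≥0∞) ^ (-(dim E : ℝ)) * ∫⁻ x, g x ∂μ := by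
  have jacobian_eq : ENNReal.ofReal |((R : ℝ) ^ dim E)⁻¹| = (R : ℝ≥0∞) ^ (-(dim E : ℝ)) := by
    rw [abs_of_nonneg (by positivity), ← inv_pow, ENNReal.ofReal_pow (by positivity),
      ENNReal.ofReal_inv_of_pos (by positivity), ENNReal.ofReal_coe_nnreal, ENNReal.rpow_neg,
      ENNReal.rpow_natCast, ENNReal.inv_pow]
  rw [← lintegral_map hg (measurable_const_smul (R : ℝ)),
    Measure.map_addHaar_smul μ (NNReal.coe_ne_zero.2 hR), lintegral_smul_measure, smul_eq_mul,
    jacobian_eq]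

/-- The integral of `‖h‖ ^ (-(dim E + q))` over the exterior of the unit ball: the constant in the
scaling law for tails of homogeneous kernels. -/
def tailIntegral (q : ℝ) : ℝ≥0∞ :=
  ∫⁻ h in {h : E | 1 ≤ ‖h‖ₑ}, ‖h‖ₑ ^ (-(dim E + q)) ∂μ

lemma tailIntegral_lt_top {q : ℝ} (hq : 0 < q) : tailIntegral μ q < ∞ := by
  set r : ℝ := dim E + q
  have integral_lt_top : ∫⁻ h : E, ENNReal.ofReal ((1 + ‖h‖) ^ (-r)) ∂μ < ∞ :=
    finite_integral_one_add_norm (by simpa [r] using hq)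
  have pointwise_le : ∀ h ∈ {h : E | 1 ≤ ‖h‖ₑ},
      ‖h‖ₑ ^ (-r) ≤ ENNReal.ofReal (2 ^ r) * ENNReal.ofReal ((1 + ‖h‖) ^ (-r)) := by
    intro h one_le
    have one_le_norm : 1 ≤ ‖h‖ := by
      rwa [mem_ofPred_eq, ← ofReal_norm, ENNReal.one_le_ofReal] at one_le
    rw [← ofReal_norm, ENNReal.ofReal_rpow_of_pos (by positivity),
      ← ENNReal.ofReal_mul (by positivity)]
    refine ENNReal.ofReal_le_ofReal ?_
    calc ‖h‖ ^ (-r) = 2 ^ r * (2 * ‖h‖) ^ (-r) := by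
          rw [Real.mul_rpow two_pos.le (norm_nonneg h), ← mul_assoc, ← Real.rpow_add two_pos,
            add_neg_cancel, Real.rpow_zero, one_mul]
      _ ≤ 2 ^ r * (1 + ‖h‖) ^ (-r) := by
          gcongr 2 ^ r * ?_
          exact Real.rpow_le_rpow_of_nonpos (by positivity) (by linarith)
            (neg_nonpos.2 (by positivity))
  calc tailIntegral μ q
      ≤ ∫⁻ h in {h : E | 1 ≤ ‖h‖ₑ},
          ENNReal.ofReal (2 ^ r) * ENNReal.ofReal ((1 + ‖h‖) ^ (-r)) ∂μ :=
        setLIntegral_mono' (measurableSet_le measurable_const measurable_enorm) pointwise_le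
    _ ≤ ∫⁻ h, ENNReal.ofReal (2 ^ r) * ENNReal.ofReal ((1 + ‖h‖) ^ (-r)) ∂μ :=
        setLIntegral_le_lintegral _ _
    _ = ENNReal.ofReal (2 ^ r) * ∫⁻ h : E, ENNReal.ofReal ((1 + ‖h‖) ^ (-r)) ∂μ :=
        lintegral_const_mul' _ _ ENNReal.ofReal_ne_top
    _ < ∞ := ENNReal.mul_lt_top ENNReal.ofReal_lt_top integral_lt_top

lemma setLIntegral_le_enorm_rpow_neg (q : ℝ) {R : ℝ≥0} (hR : R ≠ 0) :
    ∫⁻ h in {h : E | (R : ℝ≥0∞) ≤ ‖h‖ₑ}, ‖h‖ₑ ^ (-(dim E + q)) ∂μ =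
      (R : ℝ≥0∞) ^ (-q) * tailIntegral μ q := by
  set r : ℝ := dim E + q with hr
  have hR' : (R : ℝ≥0∞) ≠ 0 := ENNReal.coe_ne_zero.2 hR
  have meas_tail (S : ℝ≥0∞) : MeasurableSet {h : E | S ≤ ‖h‖ₑ} :=
    measurableSet_le measurable_const measurable_enorm
  set tail : E → ℝ≥0∞ := {h : E | (R : ℝ≥0∞) ≤ ‖h‖ₑ}.indicator (fun h => ‖h‖ₑ ^ (-r)) with h_tail
  have tail_smul (h : E) : tail ((R : ℝ) • h) =
      (R : ℝ≥0∞) ^ (-r) * {h : E | 1 ≤ ‖h‖ₑ}.indicator (fun h => ‖h‖ₑ ^ (-r)) h := by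
    have enorm_smul_eq : ‖(R : ℝ) • h‖ₑ = R * ‖h‖ₑ := by
      rw [enorm_smul, Real.enorm_of_nonneg R.coe_nonneg, ENNReal.ofReal_coe_nnreal]
    have mem_iff : (R : ℝ≥0∞) ≤ R * ‖h‖ₑ ↔ 1 ≤ ‖h‖ₑ := by
      simpa using ENNReal.mul_le_mul_iff_right (b := 1) (c := ‖h‖ₑ) hR' ENNReal.coe_ne_top
    simp only [tail, indicator_apply, mem_ofPred_eq, enorm_smul_eq, mem_iff, mul_ite, mul_zero,
      ENNReal.mul_rpow_of_ne_top ENNReal.coe_ne_top enorm_ne_top]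
  have scaled := lintegral_comp_smul_addHaar μ hR (g := tail)
    (Measurable.indicator (by fun_prop) (meas_tail R))
  simp_rw [tail_smul] at scaled
  rw [lintegral_const_mul _ (Measurable.indicator (by fun_prop) (meas_tail 1)),
    lintegral_indicator (meas_tail 1), h_tail, lintegral_indicator (meas_tail R)] at scaled
  have rpow_add (a b : ℝ) : (R : ℝ≥0∞) ^ a * (R : ℝ≥0∞) ^ b = (R : ℝ≥0∞) ^ (a + b) :=
    (ENNReal.rpow_add a b hR' ENNReal.coe_ne_top).symm
  calc ∫⁻ h in {h : E | (R : ℝ≥0∞) ≤ ‖h‖ₑ}, ‖h‖ₑ ^ (-r) ∂μ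
      = (R : ℝ≥0∞) ^ (dim E : ℝ) * ((R : ℝ≥0∞) ^ (-(dim E : ℝ)) *
          ∫⁻ h in {h : E | (R : ℝ≥0∞) ≤ ‖h‖ₑ}, ‖h‖ₑ ^ (-r) ∂μ) := by
        rw [← mul_assoc, rpow_add, add_neg_cancel, ENNReal.rpow_zero, one_mul]
    _ = (R : ℝ≥0∞) ^ (dim E : ℝ) * ((R : ℝ≥0∞) ^ (-r) * tailIntegral μ q) := by
        rw [← scaled, tailIntegral]
    _ = (R : ℝ≥0∞) ^ (-q) * tailIntegral μ q := by
        rw [← mul_assoc, rpow_add, hr]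
        ring_nf

lemma setLIntegral_ball_enorm_rpow_neg_lt_top [Nontrivial E] {a : ℝ} (ha : a < dim E) :
    ∫⁻ h in Metric.ball (0 : E) 1, ‖h‖ₑ ^ (-a) ∂μ < ∞ := by
  have integrable : IntegrableOn (fun h : E => ‖h‖ ^ (-a)) (Metric.ball 0 1) μ :=
    integrableOn_ball_of_norm_le_rpow (C := 1) Module.finrank_pos ha
      (ae_of_all _ fun h => by simp [Real.norm_of_nonneg (Real.rpow_nonneg (norm_nonneg h) _)])
      (by fun_prop : Measurable _).aestronglyMeasurable
  refine lt_of_eq_of_lt (lintegral_congr_ae ?_) integrable.lintegral_lt_top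
  filter_upwards [ae_restrict_of_ae (Measure.ae_ne μ 0)] with h h_ne
  rw [← ofReal_norm, ENNReal.ofReal_rpow_of_pos (norm_pos_iff.2 h_ne)]

lemma lintegral_min_one_rpow_mul_enorm_rpow_neg_lt_top [Nontrivial E] {p q : ℝ} (hp : 0 ≤ p)
    (hq : dim E < q) (hqp : q < dim E + p) :
    ∫⁻ h : E, min 1 ‖h‖ₑ ^ p * ‖h‖ₑ ^ (-q) ∂μ < ∞ := by
  have near : ∫⁻ h in Metric.ball (0 : E) 1, min 1 ‖h‖ₑ ^ p * ‖h‖ₑ ^ (-q) ∂μ < ∞ := by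
    refine lt_of_le_of_lt (lintegral_mono_ae ?_)
      (setLIntegral_ball_enorm_rpow_neg_lt_top μ (a := q - p) (by linarith))
    filter_upwards [ae_restrict_of_ae (Measure.ae_ne μ 0)] with h h_ne
    calc min 1 ‖h‖ₑ ^ p * ‖h‖ₑ ^ (-q) ≤ ‖h‖ₑ ^ p * ‖h‖ₑ ^ (-q) := by gcongr; exact min_le_right _ _
      _ = ‖h‖ₑ ^ (-(q - p)) := by
        rw [← ENNReal.rpow_add _ _ (enorm_ne_zero.2 h_ne) enorm_ne_top]; ring_nf
  have far : ∫⁻ h in (Metric.ball (0 : E) 1)ᶜ, min 1 ‖h‖ₑ ^ p * ‖h‖ₑ ^ (-q) ∂μ < ∞ := by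
    have compl_ball : (Metric.ball (0 : E) 1)ᶜ = {h : E | 1 ≤ ‖h‖ₑ} := by
      ext h; simp [← ofReal_norm, ENNReal.one_le_ofReal]
    rw [compl_ball]
    refine lt_of_le_of_lt (lintegral_mono fun h => ?_)
      (tailIntegral_lt_top μ (q := q - dim E) (by linarith))
    rw [add_sub_cancel]
    exact mul_le_of_le_one_left' (ENNReal.rpow_le_one (min_le_left _ _) hp)
  rw [← lintegral_add_compl _ (measurableSet_ball (x := (0 : E)) (ε := 1))]
  exact ENNReal.add_lt_top.2 ⟨near, far⟩

end PowerIntegrals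

section Averaging

lemma setLIntegral_ball_comp_add_right_le {E : Type*} [SeminormedAddCommGroup E]
    [MeasurableSpace E] [BorelSpace E] (μ : Measure E) [μ.IsAddRightInvariant] {g : E → ℝ≥0∞}
    {c u : E} {a b : ℝ} (hu : ‖u‖ + a ≤ b) :
    ∫⁻ z in Metric.ball c a, g (z + u) ∂μ ≤ ∫⁻ z in Metric.ball c b, g z ∂μ := by
  rw [← (measurePreserving_add_right μ u).setLIntegral_comp_preimage_emb
    (measurableEmbedding_addRight u) g (Metric.ball c b)]
  refine lintegral_mono_set fun z hz => ?_
  rw [mem_preimage, mem_ball_iff_norm]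
  calc ‖z + u - c‖ = ‖(z - c) + u‖ := by congr 1; abel
    _ ≤ ‖z - c‖ + ‖u‖ := norm_add_le _ _
    _ < b := by linarith [mem_ball_iff_norm.1 hz]

open scoped RealInnerProductSpace

variable {E : Type*} [NormedAddCommGroup E] [InnerProductSpace ℝ E]

lemma exists_norm_le_enorm_inner_eq (v : E) (t : ℝ≥0) :
    ∃ u : E, ‖u‖ ≤ t ∧ ‖⟪u, v⟫‖ₑ = t * ‖v‖ₑ := by
  rcases eq_or_ne v 0 with rfl | hv
  · exact ⟨0, by simp⟩
  have norm_v_ne : ‖v‖ ≠ 0 := norm_ne_zero_iff.2 hv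
  refine ⟨(t / ‖v‖ : ℝ) • v, ?_, ?_⟩
  · rw [norm_smul, Real.norm_of_nonneg (by positivity), div_mul_cancel₀ _ norm_v_ne]
  · rw [real_inner_smul_left, real_inner_self_eq_norm_mul_norm, ← mul_assoc,
      div_mul_cancel₀ _ norm_v_ne, enorm_mul, enorm_norm, Real.enorm_of_nonneg t.coe_nonneg,
      ENNReal.ofReal_coe_nnreal]

variable [MeasurableSpace E] [BorelSpace E] (μ : Measure E) [μ.IsAddRightInvariant]

-- Averaging over the direction `z - x` recovers the full size of `v` from its components.
lemma enorm_rpow_mul_measure_ball_le (v x c : E) {p : ℝ} (hp : 0 ≤ p) {t : ℝ≥0} (ht : t ≠ 0) :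
    ‖v‖ₑ ^ p * μ (Metric.ball c t) ≤
      2 * 2 ^ p * ∫⁻ z in Metric.ball c (2 * t), (‖⟪z - x, v⟫‖ₑ / t) ^ p ∂μ := by
  obtain ⟨u, norm_u_le, inner_u_eq⟩ := exists_norm_le_enorm_inner_eq v t
  set g : E → ℝ≥0∞ := fun z => (‖⟪z - x, v⟫‖ₑ / t) ^ p
  have g_meas : Measurable g :=
    (((by fun_prop : Continuous fun z => ⟪z - x, v⟫).measurable.enorm).div_const _).pow_const _
  have enorm_v_le (z : E) : ‖v‖ₑ ≤ ‖⟪z - x, v⟫‖ₑ / t + ‖⟪z + u - x, v⟫‖ₑ / t := by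
    rw [← ENNReal.add_div, ENNReal.le_div_iff_mul_le (by simp [ht]) (by simp), mul_comm,
      ← inner_u_eq]
    calc ‖⟪u, v⟫‖ₑ = ‖⟪z + u - x, v⟫ - ⟪z - x, v⟫‖ₑ := by
          rw [← inner_sub_left, sub_sub_sub_cancel_right, add_sub_cancel_left]
      _ ≤ ‖⟪z - x, v⟫‖ₑ + ‖⟪z + u - x, v⟫‖ₑ := by
          rw [add_comm ‖⟪z - x, v⟫‖ₑ]; exact enorm_sub_le
  have rpow_le (z : E) : ‖v‖ₑ ^ p ≤ 2 ^ p * (g z + g (z + u)) :=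
    (ENNReal.rpow_le_rpow (enorm_v_le z) hp).trans
      (ENNReal.add_rpow_le_two_rpow_mul_rpow_add_rpow _ _ hp)
  have t_le : (t : ℝ) ≤ 2 * t := by linarith [t.coe_nonneg]
  calc ‖v‖ₑ ^ p * μ (Metric.ball c t)
      = ∫⁻ _ in Metric.ball c t, ‖v‖ₑ ^ p ∂μ := (setLIntegral_const _ _).symm
    _ ≤ ∫⁻ z in Metric.ball c t, 2 ^ p * (g z + g (z + u)) ∂μ := lintegral_mono rpow_le
    _ = 2 ^ p * ((∫⁻ z in Metric.ball c t, g z ∂μ) +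
          ∫⁻ z in Metric.ball c t, g (z + u) ∂μ) := by
        rw [lintegral_const_mul _ (by fun_prop), lintegral_add_left g_meas]
    _ ≤ 2 ^ p * ((∫⁻ z in Metric.ball c (2 * t), g z ∂μ) +
          ∫⁻ z in Metric.ball c (2 * t), g z ∂μ) := by
        refine mul_le_mul_right (add_le_add ?_ ?_) _
        · exact lintegral_mono_set (Metric.ball_subset_ball t_le)
        · exact setLIntegral_ball_comp_add_right_le μ (by linarith)
    _ = _ := by ring

end Averaging

section Differences

variable {X F : Type*} [NormedAddCommGroup F]

/-- The `p`-th power of the size of the difference `f y - f x`, the integrand of the Gagliardo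
seminorm. -/
def diffPow (p : ℝ) (f : X → F) (x y : X) : ℝ≥0∞ :=
  ‖f y - f x‖ₑ ^ p

lemma diffPow_self {p : ℝ} (hp : 0 < p) (f : X → F) (x : X) : diffPow p f x x = 0 := by
  simp [diffPow, hp]

lemma measurable_diffPow [MeasurableSpace X] [MeasurableSpace F] [BorelSpace F]
    [SecondCountableTopology F] (p : ℝ) {f : X → F} (hf : Measurable f) :
    Measurable (Function.uncurry (diffPow p f)) := by
  unfold diffPow Function.uncurry
  fun_prop

end Differences

section ProjectedDifferences

open scoped RealInnerProductSpace

variable {E : Type*} [NormedAddCommGroup E] [InnerProductSpace ℝ E]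

/-- The size of the component of `f y - f x` along `y - x`, the integrand of the projected
Gagliardo seminorm. It vanishes for `y = x`, because `0 / 0 = 0`. -/
def projDiff (f : E → E) (x y : E) : ℝ≥0∞ :=
  ‖⟪f y - f x, y - x⟫‖ₑ / ‖y - x‖ₑ

/-- The `p`-th power of `projDiff`, the counterpart of `diffPow`. -/
def projPow (p : ℝ) (f : E → E) (x y : E) : ℝ≥0∞ :=
  projDiff f x y ^ p

lemma projPow_self {p : ℝ} (hp : 0 < p) (f : E → E) (x : E) : projPow p f x x = 0 := by
  simp [projPow, projDiff, hp]

lemma enorm_inner_eq_mul_projDiff (f : E → E) (x y : E) :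
    ‖⟪f y - f x, y - x⟫‖ₑ = ‖y - x‖ₑ * projDiff f x y := by
  rcases eq_or_ne (y - x) 0 with h | h
  · simp [h]
  · rw [projDiff, ENNReal.mul_div_cancel (enorm_ne_zero.2 h) enorm_ne_top]

lemma measurable_projPow [MeasurableSpace E] [BorelSpace E] [SecondCountableTopology E]
    (p : ℝ) {f : E → E} (hf : Measurable f) : Measurable (Function.uncurry (projPow p f)) := by
  unfold projPow projDiff Function.uncurry
  fun_prop

lemma enorm_inner_sub_le_projDiff (f : E → E) (x y z : E) :
    ‖⟪z - x, f y - f x⟫‖ₑ ≤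
      ‖z - x‖ₑ * projDiff f x z + ‖z - y‖ₑ * projDiff f y z + ‖y - x‖ₑ * ‖f z - f y‖ₑ := by
  have identity : ⟪z - x, f y - f x⟫ =
      ⟪f z - f x, z - x⟫ - ⟪f z - f y, z - y⟫ - ⟪f z - f y, y - x⟫ := by
    rw [real_inner_comm, sub_sub, ← inner_add_right, sub_add_sub_cancel, ← inner_sub_left,
      sub_sub_sub_cancel_left]
  rw [identity, ← enorm_inner_eq_mul_projDiff, ← enorm_inner_eq_mul_projDiff]
  calc ‖⟪f z - f x, z - x⟫ - ⟪f z - f y, z - y⟫ - ⟪f z - f y, y - x⟫‖ₑ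
      ≤ ‖⟪f z - f x, z - x⟫‖ₑ + ‖⟪f z - f y, z - y⟫‖ₑ + ‖⟪f z - f y, y - x⟫‖ₑ :=
        enorm_sub_le.trans (by gcongr; exact enorm_sub_le)
    _ ≤ _ := by
        gcongr
        rw [mul_comm]
        simp only [enorm, ← ENNReal.coe_mul, ENNReal.coe_le_coe]
        exact nnnorm_inner_le_nnnorm _ _

lemma add_add_rpow_le {p : ℝ} (hp : 0 ≤ p) (a b c : ℝ≥0∞) :
    (a + b + c) ^ p ≤ 4 ^ p * (a ^ p + b ^ p + c ^ p) := by
  have one_le : (1 : ℝ≥0∞) ≤ 2 ^ p := by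
    simpa using ENNReal.rpow_le_rpow (one_le_two (α := ℝ≥0∞)) hp
  calc (a + b + c) ^ p ≤ 2 ^ p * ((a + b) ^ p + c ^ p) :=
        ENNReal.add_rpow_le_two_rpow_mul_rpow_add_rpow _ _ hp
    _ ≤ 2 ^ p * (2 ^ p * (a ^ p + b ^ p) + 2 ^ p * c ^ p) := by
        gcongr
        · exact ENNReal.add_rpow_le_two_rpow_mul_rpow_add_rpow _ _ hp
        · exact le_mul_of_one_le_left' one_le
    _ = 4 ^ p * (a ^ p + b ^ p + c ^ p) := by
        rw [← mul_add, ← mul_assoc, ← ENNReal.mul_rpow_of_nonneg _ _ hp]; norm_num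

lemma enorm_inner_sub_div_rpow_le {p : ℝ} (hp : 0 ≤ p) (f : E → E) {x y z : E} {t M : ℝ≥0∞}
    (ht : t ≠ 0) (ht' : t ≠ ∞) (hM : 1 ≤ M) (hx : ‖z - x‖ₑ ≤ M * t) (hy : ‖z - y‖ₑ ≤ M * t) :
    (‖⟪z - x, f y - f x⟫‖ₑ / t) ^ p ≤ (4 * M) ^ p *
      (projPow p f x z + projPow p f y z + (‖y - x‖ₑ / t) ^ p * diffPow p f y z) := by
  have inner_le : ‖⟪z - x, f y - f x⟫‖ₑ / t ≤
      M * (projDiff f x z + projDiff f y z + ‖y - x‖ₑ / t * ‖f z - f y‖ₑ) := by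
    refine ENNReal.div_le_of_le_mul ((enorm_inner_sub_le_projDiff f x y z).trans ?_)
    calc ‖z - x‖ₑ * projDiff f x z + ‖z - y‖ₑ * projDiff f y z + ‖y - x‖ₑ * ‖f z - f y‖ₑ
        ≤ M * t * projDiff f x z + M * t * projDiff f y z +
            M * (‖y - x‖ₑ / t * t) * ‖f z - f y‖ₑ := by
          gcongr
          rw [ENNReal.div_mul_cancel ht ht']
          exact le_mul_of_one_le_left' hM
      _ = _ := by ring
  calc (‖⟪z - x, f y - f x⟫‖ₑ / t) ^ p
      ≤ M ^ p * (4 ^ p * (projPow p f x z + projPow p f y z +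
          (‖y - x‖ₑ / t * ‖f z - f y‖ₑ) ^ p)) := by
        refine (ENNReal.rpow_le_rpow inner_le hp).trans ?_
        rw [ENNReal.mul_rpow_of_nonneg _ _ hp]
        gcongr
        exact add_add_rpow_le hp _ _ _
    _ = _ := by
        rw [ENNReal.mul_rpow_of_nonneg _ _ hp, ENNReal.mul_rpow_of_nonneg _ _ hp, diffPow]; ring

end ProjectedDifferences

section Energies

variable {E : Type*} [NormedAddCommGroup E] [MeasurableSpace E]

/-- The double integral of `G` against the kernel `‖y - x‖ ^ (-q)`. Restricting `volume` to `Ω` and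
taking `q = d + s p` turns the `p`-th powers of the Gagliardo seminorms on `Ω` into energies. -/
def gagliardoEnergy (ν : Measure E) (q : ℝ) (G : E → E → ℝ≥0∞) : ℝ≥0∞ :=
  ∫⁻ x, ∫⁻ y, G x y * ‖y - x‖ₑ ^ (-q) ∂ν ∂ν

lemma gagliardoEnergy_mono_measure {ν ν' : Measure E} (h : ν ≤ ν') (q : ℝ)
    (G : E → E → ℝ≥0∞) : gagliardoEnergy ν q G ≤ gagliardoEnergy ν' q G :=
  lintegral_mono' h fun _ => lintegral_mono' h le_rfl

variable [BorelSpace E] [SecondCountableTopology E]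

/-- The integral of `G x` with respect to `ν` over the closed ball of radius `R` about `x`. -/
def localIntegral (ν : Measure E) (G : E → E → ℝ≥0∞) (x : E) (R : ℝ≥0∞) : ℝ≥0∞ :=
  ∫⁻ z in {z | ‖z - x‖ₑ ≤ R}, G x z ∂ν

lemma localIntegral_eq_lintegral_indicator (ν : Measure E) (G : E → E → ℝ≥0∞) (x : E)
    (R : ℝ≥0∞) :
    localIntegral ν G x R = ∫⁻ z, {z | ‖z - x‖ₑ ≤ R}.indicator (G x) z ∂ν :=
  (lintegral_indicator (measurableSet_le (by fun_prop) measurable_const) _).symm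

lemma setLIntegral_ball_le_localIntegral (μ : Measure E) {Ω : Set E} {c x : E} {R : ℝ} {S : ℝ≥0∞}
    (hΩ : Metric.ball c R ⊆ Ω) (hx : ∀ z ∈ Metric.ball c R, ‖z - x‖ₑ ≤ S)
    (G : E → E → ℝ≥0∞) :
    ∫⁻ z in Metric.ball c R, G x z ∂μ ≤ localIntegral (μ.restrict Ω) G x S := by
  rw [localIntegral, Measure.restrict_restrict (measurableSet_le (by fun_prop) measurable_const)]
  exact lintegral_mono_set fun z hz => ⟨hx z hz, hΩ hz⟩

lemma measurable_localIntegral {ν : Measure E} [SFinite ν] {G : E → E → ℝ≥0∞}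
    (hG : Measurable (Function.uncurry G)) :
    Measurable fun a : E × ℝ≥0∞ => localIntegral ν G a.1 a.2 := by
  simp_rw [localIntegral_eq_lintegral_indicator]
  refine Measurable.lintegral_prod_right' (f := fun b : (E × ℝ≥0∞) × E =>
    {b : (E × ℝ≥0∞) × E | ‖b.2 - b.1.1‖ₑ ≤ b.1.2}.indicator (fun b => G b.1.1 b.2) b) ?_
  exact (hG.comp (by fun_prop : Measurable fun b : (E × ℝ≥0∞) × E => (b.1.1, b.2))).indicator
    (measurableSet_le (by fun_prop) (by fun_prop))

lemma measurable_mul_enorm_sub_rpow {G : E → E → ℝ≥0∞} (hG : Measurable (Function.uncurry G))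
    (a : ℝ) : Measurable (Function.uncurry fun x y => G x y * ‖y - x‖ₑ ^ a) :=
  hG.mul (by fun_prop : Measurable fun b : E × E => ‖b.2 - b.1‖ₑ ^ a)

variable [NormedSpace ℝ E]

local notation "dim" => Module.finrank ℝ

/-- The kernel `G` averaged around its first variable at scale `c * ‖y - x‖`. The normalization
`‖y - x‖ ^ (-dim E)` of the average and the weight `‖y - x‖ ^ (-q)` of `gagliardoEnergy` are both
included. -/
def averagedKernel (ν : Measure E) (q : ℝ) (c : ℝ≥0) (G : E → E → ℝ≥0∞) (x y : E) : ℝ≥0∞ :=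
  localIntegral ν G x (c * ‖y - x‖ₑ) * ‖y - x‖ₑ ^ (-(dim E + q))

lemma measurable_averagedKernel {ν : Measure E} [SFinite ν] (q : ℝ) (c : ℝ≥0)
    {G : E → E → ℝ≥0∞} (hG : Measurable (Function.uncurry G)) :
    Measurable (Function.uncurry (averagedKernel ν q c G)) :=
  measurable_mul_enorm_sub_rpow (G := fun x y => localIntegral ν G x (c * ‖y - x‖ₑ))
    ((measurable_localIntegral hG).comp
      (by fun_prop : Measurable fun a : E × E => (a.1, (c : ℝ≥0∞) * ‖a.2 - a.1‖ₑ))) _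

variable [FiniteDimensional ℝ E] {μ ν : Measure E} [μ.IsAddHaarMeasure]

lemma setLIntegral_le_mul_enorm_sub_rpow_neg_le (hν : ν ≤ μ) (q : ℝ) {c R : ℝ≥0} (hc : c ≠ 0)
    (hR : R ≠ 0) (x : E) :
    ∫⁻ y in {y | (R : ℝ≥0∞) ≤ c * ‖y - x‖ₑ}, ‖y - x‖ₑ ^ (-(dim E + q)) ∂ν ≤
      c ^ q * tailIntegral μ q * (R : ℝ≥0∞) ^ (-q) := by
  have hc' : (c : ℝ≥0∞) ≠ 0 := ENNReal.coe_ne_zero.2 hc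
  have le_iff (y : E) : (R : ℝ≥0∞) ≤ c * ‖y - x‖ₑ ↔ ((R / c : ℝ≥0) : ℝ≥0∞) ≤ ‖y - x‖ₑ := by
    rw [ENNReal.coe_div hc, ENNReal.div_le_iff' hc' ENNReal.coe_ne_top]
  have preimage_eq : {y | (R : ℝ≥0∞) ≤ c * ‖y - x‖ₑ} =
      (fun y => y - x) ⁻¹' {h | ((R / c : ℝ≥0) : ℝ≥0∞) ≤ ‖h‖ₑ} := by
    ext y; exact le_iff y
  calc ∫⁻ y in {y | (R : ℝ≥0∞) ≤ c * ‖y - x‖ₑ}, ‖y - x‖ₑ ^ (-(dim E + q)) ∂ν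
      ≤ ∫⁻ y in {y | (R : ℝ≥0∞) ≤ c * ‖y - x‖ₑ}, ‖y - x‖ₑ ^ (-(dim E + q)) ∂μ :=
        lintegral_mono' (Measure.restrict_mono subset_rfl hν) le_rfl
    _ = ∫⁻ h in {h | ((R / c : ℝ≥0) : ℝ≥0∞) ≤ ‖h‖ₑ}, ‖h‖ₑ ^ (-(dim E + q)) ∂μ := by
        rw [preimage_eq]
        exact (measurePreserving_sub_right μ x).setLIntegral_comp_preimage
          (f := fun h => ‖h‖ₑ ^ (-(dim E + q))) (measurableSet_le measurable_const measurable_enorm)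
          (by fun_prop)
    _ = c ^ q * tailIntegral μ q * (R : ℝ≥0∞) ^ (-q) := by
        rw [setLIntegral_le_enorm_rpow_neg μ q (div_ne_zero hR hc), ENNReal.coe_div hc,
          ENNReal.rpow_neg, ← ENNReal.inv_rpow, ENNReal.inv_div (by simp) (by simp [hR]),
          div_eq_mul_inv, ENNReal.mul_rpow_of_ne_top ENNReal.coe_ne_top (by simp [hR]),
          ENNReal.inv_rpow, ← ENNReal.rpow_neg]
        ring

-- After exchanging the integrals, each `z` contributes a tail `‖z - x‖ ≤ c * ‖y - x‖` of the weight
-- in `y`, which integrates to a multiple of `‖z - x‖ ^ (-q)`.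
lemma lintegral_averagedKernel_le [SFinite ν] (hν : ν ≤ μ) (q : ℝ) {c : ℝ≥0}
    (hc : c ≠ 0) {G : E → E → ℝ≥0∞} (hG : Measurable (Function.uncurry G))
    (hG0 : ∀ x, G x x = 0) (x : E) :
    ∫⁻ y, averagedKernel ν q c G x y ∂ν ≤
      c ^ q * tailIntegral μ q * ∫⁻ z, G x z * ‖z - x‖ₑ ^ (-q) ∂ν := by
  set k : E → ℝ≥0∞ := fun y => ‖y - x‖ₑ ^ (-(dim E + q)) with hk
  have k_meas : Measurable k := by rw [hk]; fun_prop
  have G_meas : Measurable (G x) := hG.of_uncurry_left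
  have S_meas : MeasurableSet {a : E × E | ‖a.2 - x‖ₑ ≤ c * ‖a.1 - x‖ₑ} :=
    measurableSet_le (by fun_prop) (by fun_prop)
  have pair_meas : Measurable fun a : E × E =>
      {a : E × E | ‖a.2 - x‖ₑ ≤ c * ‖a.1 - x‖ₑ}.indicator (fun a => G x a.2 * k a.1) a :=
    (by fun_prop : Measurable fun a : E × E => G x a.2 * k a.1).indicator S_meas
  calc ∫⁻ y, averagedKernel ν q c G x y ∂ν
      = ∫⁻ y, ∫⁻ z, {a : E × E | ‖a.2 - x‖ₑ ≤ c * ‖a.1 - x‖ₑ}.indicator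
          (fun a => G x a.2 * k a.1) (y, z) ∂ν ∂ν := by
        refine lintegral_congr fun y => ?_
        rw [averagedKernel, localIntegral, ← lintegral_mul_const _ G_meas,
          ← lintegral_indicator (measurableSet_le (by fun_prop) measurable_const)]
        rfl
    _ = ∫⁻ z, ∫⁻ y, {a : E × E | ‖a.2 - x‖ₑ ≤ c * ‖a.1 - x‖ₑ}.indicator
          (fun a => G x a.2 * k a.1) (y, z) ∂ν ∂ν :=
        lintegral_lintegral_swap pair_meas.aemeasurable
    _ = ∫⁻ z, G x z * ∫⁻ y in {y | ‖z - x‖ₑ ≤ c * ‖y - x‖ₑ}, k y ∂ν ∂ν := by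
        refine lintegral_congr fun z => ?_
        rw [← lintegral_const_mul _ k_meas,
          ← lintegral_indicator (measurableSet_le measurable_const (by fun_prop))]
        rfl
    _ ≤ ∫⁻ z, c ^ q * tailIntegral μ q * (G x z * ‖z - x‖ₑ ^ (-q)) ∂ν := by
        refine lintegral_mono fun z => ?_
        rcases eq_or_ne z x with rfl | hz
        · simp [hG0]
        · rw [mul_left_comm]
          gcongr
          exact setLIntegral_le_mul_enorm_sub_rpow_neg_le hν q hc
            (nnnorm_ne_zero_iff.2 (sub_ne_zero.2 hz)) x
    _ = _ := lintegral_const_mul _ (by fun_prop)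

lemma lintegral_lintegral_averagedKernel_le [SFinite ν] (hν : ν ≤ μ) (q : ℝ) {c : ℝ≥0}
    (hc : c ≠ 0) {G : E → E → ℝ≥0∞} (hG : Measurable (Function.uncurry G))
    (hG0 : ∀ x, G x x = 0) :
    ∫⁻ x, ∫⁻ y, averagedKernel ν q c G x y ∂ν ∂ν ≤
      c ^ q * tailIntegral μ q * gagliardoEnergy ν q G := by
  rw [gagliardoEnergy, ← lintegral_const_mul]
  · exact lintegral_mono (lintegral_averagedKernel_le hν q hc hG hG0)
  · exact (measurable_mul_enorm_sub_rpow hG _).lintegral_prod_right'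

end Energies

section ConeDomains

variable {E : Type*} [NormedAddCommGroup E] [InnerProductSpace ℝ E]

/-- Every point `x ∈ Ω` is the apex of an infinite cone inside `Ω`, the union of the balls
`ball (x + t • e) t`, whose direction `e` does not depend on `x`. Half-spaces and epigraphs of
Lipschitz functions have this property. -/
def HasInfiniteCone (Ω : Set E) : Prop :=
  ∃ e : E, ∀ x ∈ Ω, ∀ t : ℝ, 0 < t → Metric.ball (x + t • e) t ⊆ Ω

lemma enorm_sub_le_of_mem_ball_add_smul {x y z e : E} {t M : ℝ≥0}
    (hz : z ∈ Metric.ball (x + (2 * t : ℝ) • e) (2 * t)) (hxy : ‖y - x‖ₑ ≤ t)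
    (hM : 2 * ‖e‖₊ + 3 ≤ M) : ‖z - y‖ₑ ≤ M * t := by
  have norm_xy : ‖y - x‖ ≤ t := by rw [enorm_le_coe] at hxy; exact_mod_cast hxy
  have norm_M : 2 * ‖e‖ + 3 ≤ M := by exact_mod_cast hM
  rw [← ENNReal.coe_mul, enorm_le_coe, ← NNReal.coe_le_coe, coe_nnnorm, NNReal.coe_mul]
  calc ‖z - y‖ = ‖(z - (x + (2 * t : ℝ) • e)) + (2 * t : ℝ) • e - (y - x)‖ := by
        congr 1; abel
    _ ≤ ‖z - (x + (2 * t : ℝ) • e)‖ + ‖(2 * t : ℝ) • e‖ + ‖y - x‖ :=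
        (norm_sub_le _ _).trans (by gcongr; exact norm_add_le _ _)
    _ ≤ 2 * t + 2 * t * ‖e‖ + t := by
        rw [norm_smul, Real.norm_of_nonneg (by positivity)]
        gcongr
        exact (mem_ball_iff_norm.1 hz).le
    _ = (2 * ‖e‖ + 3) * t := by ring
    _ ≤ M * t := by gcongr

variable [FiniteDimensional ℝ E] [MeasurableSpace E] [BorelSpace E] (μ : Measure E)
  [μ.IsAddHaarMeasure]

local notation "dim" => Module.finrank ℝ

lemma diffPow_mul_measure_ball_le {f : E → E} (hf : Measurable f) {p : ℝ} (hp : 0 ≤ p)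
    {Ω : Set E} {x y e : E} {t : ℝ≥0} (ht : t ≠ 0) (hxy : ‖y - x‖ₑ ≤ t)
    (hball : Metric.ball (x + (2 * t : ℝ) • e) (2 * t) ⊆ Ω) {M : ℝ≥0} (hM : 2 * ‖e‖₊ + 3 ≤ M) :
    diffPow p f x y * μ (Metric.ball 0 t) ≤ 2 * 2 ^ p * (4 * M) ^ p *
      (localIntegral (μ.restrict Ω) (projPow p f) x (M * t) +
        localIntegral (μ.restrict Ω) (projPow p f) y (M * t) +
        (‖y - x‖ₑ / t) ^ p *
          localIntegral (μ.restrict Ω) (diffPow p f) y (M * t)) := by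
  set c : E := x + (2 * t : ℝ) • e
  have near_x : ∀ z ∈ Metric.ball c (2 * t), ‖z - x‖ₑ ≤ M * t :=
    fun z hz => enorm_sub_le_of_mem_ball_add_smul hz (by simp) hM
  have near_y : ∀ z ∈ Metric.ball c (2 * t), ‖z - y‖ₑ ≤ M * t :=
    fun z hz => enorm_sub_le_of_mem_ball_add_smul hz hxy hM
  have P_meas (a : E) : Measurable (projPow p f a) := (measurable_projPow p hf).of_uncurry_left
  have D_meas : Measurable (diffPow p f y) := (measurable_diffPow p hf).of_uncurry_left
  calc diffPow p f x y * μ (Metric.ball 0 t)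
      ≤ 2 * 2 ^ p * ∫⁻ z in Metric.ball c (2 * t), (‖inner ℝ (z - x) (f y - f x)‖ₑ / t) ^ p ∂μ := by
        rw [← Measure.addHaar_ball_center μ c]
        exact enorm_rpow_mul_measure_ball_le μ _ x c hp ht
    _ ≤ 2 * 2 ^ p * ∫⁻ z in Metric.ball c (2 * t), (4 * M) ^ p *
          (projPow p f x z + projPow p f y z + (‖y - x‖ₑ / t) ^ p * diffPow p f y z) ∂μ := by
        refine mul_le_mul_right (setLIntegral_mono' measurableSet_ball fun z hz => ?_) _
        exact enorm_inner_sub_div_rpow_le hp f (by simpa using ht) (by simp)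
          (by exact_mod_cast (le_add_left (by norm_num)).trans hM) (near_x z hz) (near_y z hz)
    _ = 2 * 2 ^ p * (4 * M) ^ p * ((∫⁻ z in Metric.ball c (2 * t), projPow p f x z ∂μ) +
          (∫⁻ z in Metric.ball c (2 * t), projPow p f y z ∂μ) +
          (‖y - x‖ₑ / t) ^ p * ∫⁻ z in Metric.ball c (2 * t), diffPow p f y z ∂μ) := by
        have PP_meas : Measurable fun z => projPow p f x z + projPow p f y z :=
          (P_meas x).add (P_meas y)
        have PPD_meas : Measurable fun z =>
            projPow p f x z + projPow p f y z + (‖y - x‖ₑ / t) ^ p * diffPow p f y z :=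
          PP_meas.add (D_meas.const_mul _)
        rw [lintegral_const_mul _ PPD_meas, lintegral_add_left PP_meas,
          lintegral_add_left (P_meas x), lintegral_const_mul _ D_meas, ← mul_assoc]
    _ ≤ _ := by
        gcongr
        · exact setLIntegral_ball_le_localIntegral μ hball near_x (projPow p f)
        · exact setLIntegral_ball_le_localIntegral μ hball near_y (projPow p f)
        · exact setLIntegral_ball_le_localIntegral μ hball near_y (diffPow p f)

lemma measure_ball_coe {t : ℝ≥0} (ht : t ≠ 0) :
    μ (Metric.ball 0 t) = (t : ℝ≥0∞) ^ (dim E : ℝ) * μ (Metric.ball 0 1) := by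
  rw [Measure.addHaar_ball_of_pos μ _ (NNReal.coe_pos.2 (pos_iff_ne_zero.2 ht)),
    ENNReal.ofReal_pow NNReal.zero_le_coe, ENNReal.ofReal_coe_nnreal, ENNReal.rpow_natCast]

lemma diffPow_mul_enorm_rpow_neg_le_averagedKernel {f : E → E} (hf : Measurable f)
    {p : ℝ} (hp : 0 < p) (q : ℝ) {Ω : Set E} {x e : E}
    (hcone : ∀ t : ℝ, 0 < t → Metric.ball (x + t • e) t ⊆ Ω) {M κ : ℝ≥0}
    (hM : 2 * ‖e‖₊ + 3 ≤ M) (hκ : 1 ≤ κ) (y : E) :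
    diffPow p f x y * ‖y - x‖ₑ ^ (-q) ≤
      2 * 2 ^ p * (4 * M) ^ p / μ (Metric.ball 0 1) * κ ^ (-(dim E : ℝ)) *
        (averagedKernel (μ.restrict Ω) q (M * κ) (projPow p f) x y +
          averagedKernel (μ.restrict Ω) q (M * κ) (projPow p f) y x +
          κ ^ (-p) * averagedKernel (μ.restrict Ω) q (M * κ) (diffPow p f) y x) := by
  rcases eq_or_ne y x with rfl | hyx
  · simp [diffPow_self hp]
  have hr : ‖y - x‖ₑ ≠ 0 := enorm_ne_zero.2 (sub_ne_zero.2 hyx)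
  have hκ' : (κ : ℝ≥0∞) ≠ 0 := ENNReal.coe_ne_zero.2 (one_pos.trans_le hκ).ne'
  have hV : μ (Metric.ball (0 : E) 1) ≠ 0 := (Metric.measure_ball_pos μ 0 one_pos).ne'
  have t_pos : 0 < κ * ‖y - x‖₊ :=
    mul_pos (one_pos.trans_le hκ) (nnnorm_pos.2 (sub_ne_zero.2 hyx))
  have t_eq : ((κ * ‖y - x‖₊ : ℝ≥0) : ℝ≥0∞) = κ * ‖y - x‖ₑ := ENNReal.coe_mul _ _
  have ratio_eq : (‖y - x‖ₑ / (κ * ‖y - x‖ₑ)) ^ p = (κ : ℝ≥0∞) ^ (-p) := by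
    rw [ENNReal.rpow_neg, ← ENNReal.inv_rpow, ← one_div]
    nth_rw 1 [← one_mul ‖y - x‖ₑ]
    rw [ENNReal.mul_div_mul_right _ _ hr enorm_ne_top]
  have at_scale := diffPow_mul_measure_ball_le μ hf hp.le t_pos.ne'
    (by rw [t_eq]; exact le_mul_of_one_le_left' (by exact_mod_cast hκ))
    (hcone _ (by exact_mod_cast mul_pos two_pos t_pos)) hM
  rw [measure_ball_coe μ t_pos.ne', t_eq, ratio_eq, ← mul_assoc (M : ℝ≥0∞), ← ENNReal.coe_mul]
    at at_scale
  have weight_eq : (κ * ‖y - x‖ₑ) ^ (dim E : ℝ) * μ (Metric.ball 0 1) *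
      ((μ (Metric.ball 0 1))⁻¹ * κ ^ (-(dim E : ℝ)) * ‖y - x‖ₑ ^ (-(dim E + q))) =
        ‖y - x‖ₑ ^ (-q) :=
    mul_rpow_mul_inv_mul_rpow_neg q (Nat.cast_nonneg _) hκ' ENNReal.coe_ne_top hr enorm_ne_top hV
      measure_ball_lt_top.ne
  calc diffPow p f x y * ‖y - x‖ₑ ^ (-q)
      = diffPow p f x y * ((κ * ‖y - x‖ₑ) ^ (dim E : ℝ) * μ (Metric.ball 0 1)) *
          ((μ (Metric.ball 0 1))⁻¹ * κ ^ (-(dim E : ℝ)) * ‖y - x‖ₑ ^ (-(dim E + q))) := by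
        rw [mul_assoc, weight_eq]
    _ ≤ _ := mul_le_mul_left at_scale _
    _ = _ := by
        rw [averagedKernel, averagedKernel, averagedKernel, enorm_sub_rev x y, div_eq_mul_inv]
        ring

end ConeDomains

section KornInequality

variable {E : Type*} [NormedAddCommGroup E] [InnerProductSpace ℝ E] [FiniteDimensional ℝ E]
  [MeasurableSpace E] [BorelSpace E] (μ : Measure E) [μ.IsAddHaarMeasure]

local notation "dim" => Module.finrank ℝ

lemma gagliardoEnergy_diffPow_le_averagedKernel {f : E → E} (hf : Measurable f) {p : ℝ}
    (hp : 0 < p) (q : ℝ) {Ω : Set E} (hΩ : MeasurableSet Ω) {e : E}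
    (hcone : ∀ x ∈ Ω, ∀ t : ℝ, 0 < t → Metric.ball (x + t • e) t ⊆ Ω) {M κ : ℝ≥0}
    (hM : 2 * ‖e‖₊ + 3 ≤ M) (hκ : 1 ≤ κ) :
    gagliardoEnergy (μ.restrict Ω) q (diffPow p f) ≤
      2 * 2 ^ p * (4 * M) ^ p / μ (Metric.ball 0 1) * κ ^ (-(dim E : ℝ)) *
        (2 * (∫⁻ x in Ω, ∫⁻ y in Ω,
            averagedKernel (μ.restrict Ω) q (M * κ) (projPow p f) x y ∂μ ∂μ) +
          κ ^ (-p) * ∫⁻ x in Ω, ∫⁻ y in Ω,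
            averagedKernel (μ.restrict Ω) q (M * κ) (diffPow p f) x y ∂μ ∂μ) := by
  set ν := μ.restrict Ω
  set K : ℝ≥0∞ := 2 * 2 ^ p * (4 * M) ^ p / μ (Metric.ball 0 1)
  set P := averagedKernel ν q (M * κ) (projPow p f)
  set D := averagedKernel ν q (M * κ) (diffPow p f)
  have P_meas : Measurable (Function.uncurry P) :=
    measurable_averagedKernel q _ (measurable_projPow p hf)
  have D_meas : Measurable (Function.uncurry D) :=
    measurable_averagedKernel q _ (measurable_diffPow p hf)
  have PD_meas : Measurable (Function.uncurry fun x y => P x y + κ ^ (-p) * D x y) :=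
    P_meas.add (D_meas.const_mul _)
  calc gagliardoEnergy ν q (diffPow p f)
      ≤ (∫⁻ x, ∫⁻ y, K * κ ^ (-(dim E : ℝ)) * P x y ∂ν ∂ν) +
          ∫⁻ x, ∫⁻ y, K * κ ^ (-(dim E : ℝ)) * (P x y + κ ^ (-p) * D x y) ∂ν ∂ν := by
        refine lintegral_lintegral_le_add_of_le_add_swap (P_meas.const_mul _)
          (PD_meas.const_mul _) ?_
        filter_upwards [ae_restrict_mem hΩ] with x hx y
        rw [← mul_add, ← add_assoc]
        exact diffPow_mul_enorm_rpow_neg_le_averagedKernel μ hf hp q (hcone x hx) hM hκ y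
    _ = _ := by
        rw [lintegral_lintegral_const_mul _ P_meas, lintegral_lintegral_const_mul _ PD_meas,
          lintegral_lintegral_add_s16 P_meas, lintegral_lintegral_const_mul _ D_meas]
        ring

lemma exists_gagliardoEnergy_diffPow_le_add {Ω : Set E} (hΩ : MeasurableSet Ω)
    (hcone : HasInfiniteCone Ω) {p q : ℝ} (hp : 0 < p) (hq : 0 < q) :
    ∃ K : ℝ≥0∞, K ≠ ∞ ∧ ∀ κ : ℝ≥0, 1 ≤ κ → ∀ f : E → E, Measurable f →
      gagliardoEnergy (μ.restrict Ω) q (diffPow p f) ≤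
        K * κ ^ (q - dim E) * (2 * gagliardoEnergy (μ.restrict Ω) q (projPow p f) +
          κ ^ (-p) * gagliardoEnergy (μ.restrict Ω) q (diffPow p f)) := by
  obtain ⟨e, ball_subset⟩ := hcone
  set M : ℝ≥0 := 2 * ‖e‖₊ + 3
  set K : ℝ≥0∞ := 2 * 2 ^ p * (4 * M) ^ p / μ (Metric.ball 0 1)
  have K_ne_top : K ≠ ∞ := ENNReal.div_ne_top (by finiteness)
    (Metric.measure_ball_pos μ 0 one_pos).ne'
  have T_ne_top : tailIntegral μ q ≠ ∞ := (tailIntegral_lt_top μ hq).ne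
  refine ⟨K * (M ^ q * tailIntegral μ q), by finiteness, fun κ hκ f hf => ?_⟩
  have κ_ne : κ ≠ 0 := (one_pos.trans_le hκ).ne'
  have transfer {G : E → E → ℝ≥0∞} (hG : Measurable (Function.uncurry G))
      (hG0 : ∀ x, G x x = 0) := lintegral_lintegral_averagedKernel_le
    (Measure.restrict_le_self (μ := μ) (s := Ω)) q (by positivity : M * κ ≠ 0) hG hG0
  calc gagliardoEnergy (μ.restrict Ω) q (diffPow p f)
      ≤ K * κ ^ (-(dim E : ℝ)) *
          (2 * ((M * κ : ℝ≥0) ^ q * tailIntegral μ q *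
              gagliardoEnergy (μ.restrict Ω) q (projPow p f)) +
            κ ^ (-p) * ((M * κ : ℝ≥0) ^ q * tailIntegral μ q *
              gagliardoEnergy (μ.restrict Ω) q (diffPow p f))) := by
        refine (gagliardoEnergy_diffPow_le_averagedKernel μ hf hp q hΩ ball_subset le_rfl
          hκ).trans ?_
        gcongr
        · exact transfer (measurable_projPow p hf) (projPow_self hp f)
        · exact transfer (measurable_diffPow p hf) (diffPow_self hp f)
    _ = _ := by
        rw [ENNReal.coe_mul, ENNReal.mul_rpow_of_nonneg _ _ hq.le, sub_eq_neg_add,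
          ENNReal.rpow_add _ _ (ENNReal.coe_ne_zero.2 κ_ne) ENNReal.coe_ne_top]
        ring

theorem exists_gagliardoEnergy_diffPow_le_projPow {Ω : Set E} (hΩ : MeasurableSet Ω)
    (hcone : HasInfiniteCone Ω) {p q : ℝ} (hp : 0 < p) (hq : 0 < q) (hqp : q < dim E + p) :
    ∃ C : ℝ≥0∞, C ≠ ∞ ∧ ∀ f : E → E, Measurable f →
      gagliardoEnergy (μ.restrict Ω) q (diffPow p f) ≠ ∞ →
      gagliardoEnergy (μ.restrict Ω) q (diffPow p f) ≤
        C * gagliardoEnergy (μ.restrict Ω) q (projPow p f) := by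
  obtain ⟨K, K_ne_top, energy_le⟩ := exists_gagliardoEnergy_diffPow_le_add μ hΩ hcone hp hq
  obtain ⟨κ, one_le_κ, error_le⟩ :=
    exists_one_le_mul_rpow_neg_le_half K_ne_top (a := dim E + p - q) (by linarith)
  have κ_ne : (κ : ℝ≥0∞) ≠ 0 := ENNReal.coe_ne_zero.2 (one_pos.trans_le one_le_κ).ne'
  refine ⟨2 * (K * κ ^ (q - dim E) * 2), by finiteness, fun f hf energy_ne_top => ?_⟩
  rw [mul_assoc]
  refine le_two_mul_of_le_add_half_mul energy_ne_top ((energy_le κ one_le_κ f hf).trans ?_)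
  calc K * κ ^ (q - dim E) * (2 * gagliardoEnergy (μ.restrict Ω) q (projPow p f) +
          κ ^ (-p) * gagliardoEnergy (μ.restrict Ω) q (diffPow p f))
      = K * κ ^ (q - dim E) * 2 * gagliardoEnergy (μ.restrict Ω) q (projPow p f) +
          K * (κ ^ (q - dim E) * κ ^ (-p)) * gagliardoEnergy (μ.restrict Ω) q (diffPow p f) := by
        ring
    _ ≤ _ := by
        rw [← ENNReal.rpow_add _ _ κ_ne ENNReal.coe_ne_top,
          show q - dim E + -p = -(dim E + p - q) by ring]
        gcongr

end KornInequality

section Finiteness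

variable {E F : Type*} [NormedAddCommGroup E] [NormedAddCommGroup F]

lemma exists_enorm_sub_le_mul_min_one {f : E → F} {L : ℝ≥0} (hf : LipschitzWith L f)
    (hfc : HasCompactSupport f) : ∃ B : ℝ≥0, ∀ x y, ‖f y - f x‖ₑ ≤ B * min 1 ‖y - x‖ₑ := by
  obtain ⟨M, hM⟩ := hfc.exists_bound_of_continuous hf.continuous
  refine ⟨max L (2 * M.toNNReal), fun x y => ?_⟩
  have enorm_le (a : E) : ‖f a‖ₑ ≤ M.toNNReal := by
    rw [enorm_le_coe]; exact NNReal.le_toNNReal_of_coe_le (hM a)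
  rw [mul_min, mul_one, le_min_iff]
  constructor
  · calc ‖f y - f x‖ₑ ≤ ‖f y‖ₑ + ‖f x‖ₑ := enorm_sub_le
      _ ≤ M.toNNReal + M.toNNReal := add_le_add (enorm_le y) (enorm_le x)
      _ = ((2 * M.toNNReal : ℝ≥0) : ℝ≥0∞) := by push_cast; ring
      _ ≤ _ := by gcongr; exact le_max_right _ _
  · calc ‖f y - f x‖ₑ ≤ L * ‖y - x‖ₑ := by
          rw [← edist_eq_enorm_sub, ← edist_eq_enorm_sub]; exact hf y x
      _ ≤ _ := by gcongr; exact le_max_left _ _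

variable [NormedSpace ℝ E] [FiniteDimensional ℝ E] [MeasurableSpace E] [BorelSpace E]
  (μ : Measure E) [μ.IsAddHaarMeasure]

local notation "dim" => Module.finrank ℝ

lemma gagliardoEnergy_diffPow_ne_top [Nontrivial E] {f : E → F} {L : ℝ≥0}
    (hf : LipschitzWith L f) (hfc : HasCompactSupport f) {p q : ℝ} (hp : 0 < p)
    (hq : dim E < q) (hqp : q < dim E + p) : gagliardoEnergy μ q (diffPow p f) ≠ ∞ := by
  obtain ⟨B, hB⟩ := exists_enorm_sub_le_mul_min_one hf hfc
  set k : E → ℝ≥0∞ := fun h => B ^ p * (min 1 ‖h‖ₑ ^ p * ‖h‖ₑ ^ (-q)) with hk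
  set Φ : E → E → ℝ≥0∞ := fun x y => (tsupport f).indicator 1 x * k (y - x)
  have S_meas : MeasurableSet (tsupport f) := hfc.isCompact.measurableSet
  have k_meas : Measurable k := by rw [hk]; fun_prop
  have Φ_meas : Measurable (Function.uncurry Φ) :=
    ((measurable_one.indicator S_meas).comp measurable_fst).mul (by fun_prop)
  have k_symm (x y : E) : k (x - y) = k (y - x) := by simp only [hk, enorm_sub_rev]
  have le_k (x y : E) : diffPow p f x y * ‖y - x‖ₑ ^ (-q) ≤ k (y - x) := by
    simp only [hk]
    rw [← mul_assoc, ← ENNReal.mul_rpow_of_nonneg _ _ hp.le]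
    exact mul_le_mul_left (ENNReal.rpow_le_rpow (hB x y) hp.le) _
  have le_add (x y : E) : diffPow p f x y * ‖y - x‖ₑ ^ (-q) ≤ Φ x y + Φ y x := by
    by_cases hx : x ∈ tsupport f
    · exact (le_k x y).trans (by simp [Φ, hx])
    by_cases hy : y ∈ tsupport f
    · exact (le_k x y).trans (by simp [Φ, hy, k_symm])
    · simp [diffPow, image_eq_zero_of_notMem_tsupport hx, image_eq_zero_of_notMem_tsupport hy, hp]
  have k_ne_top : ∫⁻ h, k h ∂μ ≠ ∞ := by
    rw [hk, lintegral_const_mul _ (by fun_prop)]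
    exact ENNReal.mul_ne_top (by finiteness)
      (lintegral_min_one_rpow_mul_enorm_rpow_neg_lt_top μ hp.le hq hqp).ne
  have Φ_ne_top : ∫⁻ x, ∫⁻ y, Φ x y ∂μ ∂μ ≠ ∞ := by
    rw [lintegral_lintegral_indicator_one_mul_comp_sub μ S_meas k_meas]
    exact ENNReal.mul_ne_top hfc.isCompact.measure_lt_top.ne k_ne_top
  exact ne_top_of_le_ne_top (ENNReal.add_ne_top.2 ⟨Φ_ne_top, Φ_ne_top⟩)
    (lintegral_lintegral_le_add_of_le_add_swap Φ_meas Φ_meas (ae_of_all _ le_add))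

end Finiteness

section HalfSpace

variable {n : ℕ} {s p : ℝ}

lemma ofReal_rpow_div_norm_rpow {E : Type*} [NormedAddCommGroup E] {a q : ℝ} (ha : 0 ≤ a)
    (hp : 0 < p) {h : E} (h_zero : h = 0 → a = 0) :
    ENNReal.ofReal (a ^ p / ‖h‖ ^ q) = ENNReal.ofReal a ^ p * ‖h‖ₑ ^ (-q) := by
  rcases eq_or_ne h 0 with rfl | hh
  · simp [h_zero rfl, hp, hp.ne']
  · rw [div_eq_mul_inv, ← Real.rpow_neg (norm_nonneg h), ENNReal.ofReal_mul (by positivity),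
      ENNReal.ofReal_rpow_of_nonneg ha hp.le, ← ENNReal.ofReal_rpow_of_pos (norm_pos_iff.2 hh),
      ofReal_norm]

lemma gagP_eq_gagliardoEnergy (hp : 0 < p) (Ω : Set (Ed n)) (f : Ed n → Ed n) :
    gagP n s p Ω f = gagliardoEnergy (volume.restrict Ω) (n + s * p) (diffPow p f) := by
  refine lintegral_congr fun x => lintegral_congr fun y => ?_
  rw [ofReal_rpow_div_norm_rpow (norm_nonneg _) hp fun h => by simp [sub_eq_zero.1 h],
    ofReal_norm, diffPow]

lemma projGagP_eq_gagliardoEnergy (hp : 0 < p) (Ω : Set (Ed n)) (f : Ed n → Ed n) :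
    projGagP n s p Ω f = gagliardoEnergy (volume.restrict Ω) (n + s * p) (projPow p f) := by
  refine lintegral_congr fun x => lintegral_congr fun y => ?_
  rw [ofReal_rpow_div_norm_rpow (by positivity) hp fun h => by simp [h], projPow]
  rcases eq_or_ne (y - x) 0 with h | h
  · simp [projDiff, h]
  · rw [ENNReal.ofReal_div_of_pos (norm_pos_iff.2 h), ← Real.norm_eq_abs, ofReal_norm,
      ofReal_norm, projDiff]

lemma measurableSet_upperHalf (d : ℕ) : MeasurableSet (upperHalf d) :=
  measurableSet_lt measurable_const (by fun_prop)

lemma hasInfiniteCone_upperHalf (d : ℕ) : HasInfiniteCone (upperHalf d) := by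
  refine ⟨EuclideanSpace.single (Fin.last d) 1, fun x hx t _ z hz => ?_⟩
  have coord_lt := (PiLp.norm_apply_le _ (Fin.last d)).trans_lt (mem_ball_iff_norm.1 hz)
  simp only [PiLp.sub_apply, PiLp.add_apply, PiLp.smul_apply, PiLp.single_apply, if_true,
    smul_eq_mul, mul_one, Real.norm_eq_abs] at coord_lt
  have hx : 0 < x (Fin.last d) := hx
  change 0 < z (Fin.last d)
  linarith [(abs_lt.1 coord_lt).1]

lemma gagP_ne_top {d : ℕ} {f : Ed (d + 1) → Ed (d + 1)} (hf : ContDiff ℝ 1 f)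
    (hfc : HasCompactSupport f) (hs : s ∈ Ioo (0 : ℝ) 1) (hp : 0 < p) (Ω : Set (Ed (d + 1))) :
    gagP (d + 1) s p Ω f ≠ ∞ := by
  obtain ⟨L, hL⟩ := hf.lipschitzWith_of_hasCompactSupport hfc one_ne_zero
  rw [gagP_eq_gagliardoEnergy hp]
  refine ne_top_of_le_ne_top (gagliardoEnergy_diffPow_ne_top volume hL hfc hp ?_ ?_)
    (gagliardoEnergy_mono_measure Measure.restrict_le_self _ _)
  · rw [finrank_euclideanSpace_fin]
    exact lt_add_of_pos_right _ (mul_pos hs.1 hp)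
  · rw [finrank_euclideanSpace_fin]
    gcongr
    exact mul_lt_of_lt_one_left hp hs.2

theorem fractional_korn_halfspace_general (hs : s ∈ Ioo (0 : ℝ) 1) (hp : 0 < p) {Ω : Set (Ed n)}
    (hΩ : MeasurableSet Ω) (hcone : HasInfiniteCone Ω) :
    ∃ C : ℝ, 0 < C ∧ ∀ f : Ed n → Ed n, Measurable f → gagP n s p Ω f ≠ ∞ →
      gagP n s p Ω f ≤ ENNReal.ofReal C * projGagP n s p Ω f := by
  have sp_pos : 0 < s * p := mul_pos hs.1 hp
  have sp_lt : s * p < p := mul_lt_of_lt_one_left hp hs.2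
  obtain ⟨C, C_ne_top, energy_le⟩ := exists_gagliardoEnergy_diffPow_le_projPow volume hΩ hcone hp
    (q := n + s * p) (by positivity) (by rw [finrank_euclideanSpace_fin]; gcongr)
  refine ⟨C.toReal + 1, by positivity, fun f hf finite => ?_⟩
  rw [gagP_eq_gagliardoEnergy hp] at finite ⊢
  rw [projGagP_eq_gagliardoEnergy hp]
  refine (energy_le f hf finite).trans ?_
  gcongr
  rw [ENNReal.le_ofReal_iff_toReal_le C_ne_top (by positivity)]
  exact le_add_of_nonneg_right zero_le_one

end HalfSpace

/-- **Fractional Korn inequality on the half-space.** Let `s ∈ (0,1)`, `1 < p < ∞` with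
`sp ≠ 1`. There is `C = C(d,p,s) > 0` such that every
`f ∈ C_c^∞(ℝ^{d+1}_+; ℝ^{d+1})` satisfies
`[f]_{W^{s,p}(ℝ^{d+1}_+)}^p ≤ C [f]_{𝒳^s_p(ℝ^{d+1}_+)}^p`.
(The dimension is written as `d + 1`, realizing an arbitrary dimension `≥ 1`.) -/
theorem fractional_korn_halfspace (d : ℕ) (s p : ℝ) (hs : s ∈ Set.Ioo (0 : ℝ) 1)
    (hp : 1 < p) (hps : s * p ≠ 1) :
    ∃ C : ℝ, 0 < C ∧
      ∀ f : Ed (d + 1) → Ed (d + 1),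
        ContDiff ℝ (⊤ : ℕ∞) f → HasCompactSupport f → tsupport f ⊆ upperHalf d →
        gagP (d + 1) s p (upperHalf d) f ≤
          ENNReal.ofReal C * projGagP (d + 1) s p (upperHalf d) f := by
  obtain ⟨C, C_pos, korn⟩ := fractional_korn_halfspace_general hs (one_pos.trans hp)
    (measurableSet_upperHalf d) (hasInfiniteCone_upperHalf d)
  exact ⟨C, C_pos, fun f hf hfc _ => korn f hf.continuous.measurable
    (gagP_ne_top (hf.of_le (by simp)) hfc hs (one_pos.trans hp) _)⟩
end
end
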